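/- arXiv:1803.04082 — 3 statements merged into one kernel-verified Lean document; each statement's English description precedes it below -/
import Mathlib

section
/- Let a < b be real numbers and f : [a,b] → [a,b] a continuous map for which there exist l ≥ 1 and points a = c₀ < c₁ < ⋯ < c_l = b such that f is strictly monotone (strictly increasing or strictly decreasing) on each lap [c_{i−1}, c_i]. Assume that each interior partition point cᵢ (0 < i < l) is attracted to a periodic orbit of f: there exist an integer m ≥ 1 and a point p ∈ [a,b] with f^m(p) = p such that f^{m·n}(cᵢ) → p as n → ∞. Then the topological entropy h := h_top(f, [a,b]) is a finite nonnegative real number and exp(h) is an algebraic number (algebraic over ℚ). -/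
open Set Filter Topology

namespace Knead

/-- `g` is continuous and strictly monotone on each interval whose interior avoids `C`. -/
def PM (g : ℝ → ℝ) (C : Finset ℝ) : Prop :=
  Continuous g ∧ ∀ u v, u < v → (∀ x ∈ C, x ∉ Ioo u v) →
    StrictMonoOn g (Icc u v) ∨ StrictAntiOn g (Icc u v)

/-- Points of `[u,v]` hitting `C` before time `n`. -/
def Q (g : ℝ → ℝ) (C : Finset ℝ) (u v : ℝ) (n : ℕ) : Set ℝ :=
  {z | z ∈ Icc u v ∧ ∃ j < n, g^[j] z ∈ C}

lemma card_of_sep (S T : Set ℝ) (hS : S.Finite)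
    (h : ∀ x ∈ T, ∀ y ∈ T, x < y → ∃ z ∈ S, z ∈ Ioc x y) :
    T.Finite ∧ T.ncard ≤ S.ncard + 1 := by
  classical
  set φ : ℝ → ℕ := fun x => (S ∩ Iic x).ncard with hφ
  have hlt : ∀ x ∈ T, ∀ y ∈ T, x < y → φ x < φ y := by
    intro x hx y hy hxy
    obtain ⟨z, hz, hz1, hz2⟩ := h x hx y hy hxy
    apply Set.ncard_lt_ncard _ (hS.subset inter_subset_left)
    refine ⟨fun w hw => ⟨hw.1, le_trans hw.2 hxy.le⟩, fun hh => ?_⟩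
    have := hh ⟨hz, hz2⟩
    exact absurd this.2 (not_le.2 hz1)
  have hinj : InjOn φ T := by
    intro x hx y hy hxy
    rcases lt_trichotomy x y with h1 | h1 | h1
    · exact absurd hxy (hlt x hx y hy h1).ne
    · exact h1
    · exact absurd hxy (hlt y hy x hx h1).ne'
  have hmaps : MapsTo φ T (Finset.range (S.ncard + 1) : Set ℕ) := by
    intro x hx
    simp only [Finset.coe_range, mem_Iio]
    exact Nat.lt_succ_of_le (Set.ncard_le_ncard inter_subset_left hS)
  refine ⟨Set.Finite.of_injOn hmaps hinj (Finset.finite_toSet _), ?_⟩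
  have := Set.ncard_le_ncard_of_injOn φ hmaps hinj (Finset.finite_toSet _)
  simpa using this

lemma sortmap {g : ℝ → ℝ} (hg : Continuous g) {u v y : ℝ} (huv : u ≤ v)
    (hy : y ∈ Ioo (min (g u) (g v)) (max (g u) (g v))) : ∃ z ∈ Ioo u v, g z = y := by
  rcases le_total (g u) (g v) with h | h
  · rw [min_eq_left h, max_eq_right h] at hy
    exact intermediate_value_Ioo huv hg.continuousOn hy
  · rw [min_eq_right h, max_eq_left h] at hy
    exact intermediate_value_Ioo' huv hg.continuousOn hy

lemma iter_ne {g : ℝ → ℝ} {C : Finset ℝ} (h : PM g C) : ∀ (n : ℕ) (u v : ℝ), u < v →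
    (∀ z ∈ Ioo u v, ∀ j < n, g^[j] z ∉ C) → g^[n] u ≠ g^[n] v := by
  intro n
  induction n with
  | zero => intro u v huv _; simpa using huv.ne
  | succ n ih =>
    intro u v huv hz
    have hne : g u ≠ g v := by
      rcases h.2 u v huv (fun x hx hxI => hz x hxI 0 (Nat.succ_pos _) hx) with hm | hm
      · exact (hm (left_mem_Icc.2 huv.le) (right_mem_Icc.2 huv.le) huv).ne
      · exact (hm (left_mem_Icc.2 huv.le) (right_mem_Icc.2 huv.le) huv).ne'
    have key := ih (min (g u) (g v)) (max (g u) (g v)) (min_lt_max.2 hne) (by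
      intro y hy j hj
      obtain ⟨z, hzI, rfl⟩ := sortmap h.1 huv.le hy
      exact hz z hzI (j+1) (by omega))
    simp only [Function.iterate_succ, Function.comp]
    rcases le_total (g u) (g v) with h' | h'
    · simpa [min_eq_left h', max_eq_right h'] using key
    · rw [min_eq_right h', max_eq_left h'] at key
      exact key.symm

lemma fibre {g : ℝ → ℝ} {C : Finset ℝ} (h : PM g C) (u v : ℝ) (n : ℕ)
    (hQ : (Q g C u v n).Finite) (d : ℝ) :
    {z | z ∈ Icc u v ∧ g^[n] z = d}.Finite ∧
      {z | z ∈ Icc u v ∧ g^[n] z = d}.ncard ≤ (Q g C u v n).ncard + 1 := by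
  apply card_of_sep _ _ hQ
  rintro x ⟨hx, hxd⟩ y ⟨hy, hyd⟩ hxy
  by_contra hcon
  push Not at hcon
  refine iter_ne h n x y hxy ?_ (hxd.trans hyd.symm)
  intro z hz j hj hC
  exact hcon z ⟨⟨hx.1.trans hz.1.le, hz.2.le.trans hy.2⟩, j, hj, hC⟩ ⟨hz.1, hz.2.le⟩

lemma fibres {g : ℝ → ℝ} {C : Finset ℝ} (h : PM g C) (u v : ℝ) (n : ℕ)
    (hQ : (Q g C u v n).Finite) (D : Set ℝ) (hD : D.Finite) :
    {z | z ∈ Icc u v ∧ g^[n] z ∈ D}.Finite ∧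
      {z | z ∈ Icc u v ∧ g^[n] z ∈ D}.ncard ≤ D.ncard * ((Q g C u v n).ncard + 1) := by
  induction D, hD using Set.Finite.induction_on with
  | empty => simp
  | @insert a s ha hs ih =>
    have e : {z | z ∈ Icc u v ∧ g^[n] z ∈ insert a s} =
        {z | z ∈ Icc u v ∧ g^[n] z = a} ∪ {z | z ∈ Icc u v ∧ g^[n] z ∈ s} := by
      ext z; simp only [mem_insert_iff, mem_ofPred_eq, mem_union]; tauto
    have hf := fibre h u v n hQ a
    rw [e]
    refine ⟨hf.1.union ih.1, (Set.ncard_union_le _ _).trans ?_⟩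
    rw [Set.ncard_insert_of_notMem ha hs]
    nlinarith [hf.2, ih.2]

lemma Q_succ (g : ℝ → ℝ) (C : Finset ℝ) (u v : ℝ) (n : ℕ) :
    Q g C u v (n+1) = Q g C u v n ∪ {z | z ∈ Icc u v ∧ g^[n] z ∈ (C : Set ℝ)} := by
  ext z
  simp only [Q, mem_ofPred_eq, mem_union, Finset.mem_coe]
  constructor
  · rintro ⟨hz, j, hj, hc⟩
    rcases Nat.lt_succ_iff_lt_or_eq.1 hj with h | rfl
    · exact Or.inl ⟨hz, j, h, hc⟩
    · exact Or.inr ⟨hz, hc⟩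
  · rintro (⟨hz, j, hj, hc⟩ | ⟨hz, hc⟩)
    · exact ⟨hz, j, by omega, hc⟩
    · exact ⟨hz, n, by omega, hc⟩

lemma Q_finite {g : ℝ → ℝ} {C : Finset ℝ} (h : PM g C) (u v : ℝ) (n : ℕ) :
    (Q g C u v n).Finite := by
  induction n with
  | zero => simp [Q]
  | succ n ih =>
    rw [Q_succ]
    exact ih.union (fibres h u v n ih C C.finite_toSet).1

lemma Q_mono (g : ℝ → ℝ) (C : Finset ℝ) (u v : ℝ) {m n : ℕ} (hmn : m ≤ n) :
    Q g C u v m ⊆ Q g C u v n := fun _ ⟨hz, j, hj, hc⟩ => ⟨hz, j, by omega, hc⟩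

lemma iterate_mapsTo {g : ℝ → ℝ} {a b : ℝ} (hm : MapsTo g (Icc a b) (Icc a b)) (n : ℕ) :
    MapsTo g^[n] (Icc a b) (Icc a b) := hm.iterate n

lemma Q_submul {g : ℝ → ℝ} {C : Finset ℝ} (h : PM g C) {a b : ℝ}
    (hm : MapsTo g (Icc a b) (Icc a b)) (m n : ℕ) :
    (Q g C a b (m+n)).ncard + 1 ≤ ((Q g C a b m).ncard + 1) * ((Q g C a b n).ncard + 1) := by
  have hsub : Q g C a b (m+n) ⊆ Q g C a b m ∪ {z | z ∈ Icc a b ∧ g^[m] z ∈ Q g C a b n} := by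
    rintro z ⟨hz, j, hj, hc⟩
    by_cases hjm : j < m
    · exact Or.inl ⟨hz, j, hjm, hc⟩
    · refine Or.inr ⟨hz, hm.iterate m hz, j - m, by omega, ?_⟩
      rw [← Function.iterate_add_apply, Nat.sub_add_cancel (by omega)]
      exact hc
  have hf := fibres h a b m (Q_finite h a b m) _ (Q_finite h a b n)
  have h1 := Set.ncard_le_ncard hsub ((Q_finite h a b m).union hf.1)
  have h2 := Set.ncard_union_le (Q g C a b m) {z | z ∈ Icc a b ∧ g^[m] z ∈ Q g C a b n}
  nlinarith [hf.2]

/-- lap-count proxy -/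
noncomputable def L (g : ℝ → ℝ) (C : Finset ℝ) (a b : ℝ) (n : ℕ) : ℝ :=
  (Q g C a b n).ncard + 1

lemma L_ge_one (g : ℝ → ℝ) (C : Finset ℝ) (a b : ℝ) (n : ℕ) : 1 ≤ L g C a b n := by
  unfold L; linarith [Nat.cast_nonneg (α := ℝ) (Q g C a b n).ncard]

lemma L_subadd {g : ℝ → ℝ} {C : Finset ℝ} (h : PM g C) {a b : ℝ}
    (hm : MapsTo g (Icc a b) (Icc a b)) : Subadditive (fun n => Real.log (L g C a b n)) := by
  intro m n
  have h1 := L_ge_one g C a b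
  dsimp only
  rw [← Real.log_mul (by linarith [h1 m]) (by linarith [h1 n])]
  apply Real.log_le_log (by linarith [h1 (m+n)])
  have := Q_submul h hm m n
  unfold L
  exact_mod_cast this

/-- growth rate -/
lemma growth {g : ℝ → ℝ} {C : Finset ℝ} (h : PM g C) {a b : ℝ}
    (hm : MapsTo g (Icc a b) (Icc a b)) : ∃ s : ℝ, 0 ≤ s ∧
    (∀ n : ℕ, Real.exp (s * n) ≤ L g C a b n) ∧
    (∀ r > s, ∀ᶠ n : ℕ in atTop, L g C a b n ≤ Real.exp (r * n)) := by
  have hs := L_subadd h hm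
  have h1 := L_ge_one g C a b
  have hl : ∀ n, 0 ≤ Real.log (L g C a b n) := fun n => Real.log_nonneg (h1 n)
  have hb : BddBelow (range fun n : ℕ => Real.log (L g C a b n) / n) :=
    ⟨0, by rintro _ ⟨n, rfl⟩; exact div_nonneg (hl n) (Nat.cast_nonneg n)⟩
  have ht := hs.tendsto_lim hb
  refine ⟨hs.lim, ge_of_tendsto' ht fun n => div_nonneg (hl n) (Nat.cast_nonneg n), ?_, ?_⟩
  · intro n
    rcases Nat.eq_zero_or_pos n with rfl | hn
    · simpa using h1 0
    · have := hs.lim_le_div hb hn.ne'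
      rw [le_div_iff₀ (by exact_mod_cast hn)] at this
      rw [← Real.le_log_iff_exp_le (by linarith [h1 n])]
      exact this
  · intro r hr
    filter_upwards [ht.eventually (gt_mem_nhds hr), eventually_gt_atTop 0] with n hn hn0
    rw [div_lt_iff₀ (by exact_mod_cast hn0)] at hn
    rw [← Real.log_le_iff_le_exp (by linarith [h1 n])]
    exact hn.le

end Knead

namespace Knead

lemma grid (a b ε : ℝ) (hε : 0 < ε) : ∃ D : Finset ℝ, ∀ x y, x ∈ Icc a b → y ∈ Icc a b →
    x + ε ≤ y → ∃ d ∈ D, d ∈ Ioo x y := by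
  classical
  obtain ⟨K, hK⟩ := exists_nat_gt ((b - a) * (2 / ε))
  refine ⟨(Finset.range (K+1)).image (fun k : ℕ => a + k * (ε / 2)), ?_⟩
  intro x y hx hy hxy
  set k := ⌊(x - a) * (2 / ε)⌋₊ + 1 with hk
  have h0 : 0 ≤ (x - a) * (2/ε) := mul_nonneg (by linarith [hx.1]) (by positivity)
  have h1 : (x - a) * (2/ε) < k := by rw [hk]; push_cast; exact Nat.lt_floor_add_one _
  have h2 : (k : ℝ) ≤ (x - a) * (2/ε) + 1 := by
    rw [hk]; push_cast; linarith [Nat.floor_le h0]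
  have e : ∀ w : ℝ, w * (2/ε) * (ε/2) = w := by intro w; field_simp
  have h3 : x < a + k * (ε/2) := by
    have := mul_lt_mul_of_pos_right h1 (half_pos hε)
    rw [e] at this; linarith
  have h4 : a + k * (ε/2) < y := by
    have := mul_le_mul_of_nonneg_right h2 (half_pos hε).le
    rw [add_mul, e] at this; linarith
  refine ⟨_, Finset.mem_image.2 ⟨k, ?_, rfl⟩, h3, h4⟩
  rw [Finset.mem_range, Nat.lt_succ_iff]
  have : (k:ℝ) < K := by
    refine lt_trans ?_ hK
    have : (k : ℝ) * (ε/2) < b - a := by linarith [hy.2]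
    have := mul_lt_mul_of_pos_right this (show 0 < 2/ε by positivity)
    calc (k:ℝ) = k * (ε/2) * (2/ε) := by field_simp
      _ < _ := this
  exact_mod_cast this.le

lemma QD_bound {g : ℝ → ℝ} {C : Finset ℝ} (h : PM g C) (a b : ℝ) (D : Finset ℝ) (N n : ℕ)
    (hn : n ≤ N) :
    (Q g D a b n).Finite ∧ (Q g D a b n).ncard ≤ n * (D.card * ((Q g C a b N).ncard + 1)) := by
  induction n with
  | zero => simp [Q]
  | succ n ih =>
    have ih := ih (by omega)
    have hf := fibres h a b n (Q_finite h a b n) D D.finite_toSet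
    rw [Q_succ]
    refine ⟨ih.1.union hf.1, (Set.ncard_union_le _ _).trans ?_⟩
    have h1 : (Q g C a b n).ncard ≤ (Q g C a b N).ncard :=
      Set.ncard_le_ncard (Q_mono g C a b (by omega)) (Q_finite h a b N)
    have h2 := hf.2
    rw [Set.ncard_coe_finset] at h2
    have h3 : D.card * ((Q g C a b n).ncard + 1) ≤ D.card * ((Q g C a b N).ncard + 1) := by
      gcongr
    nlinarith [ih.2]

lemma iter_eq {f g : ℝ → ℝ} {a b : ℝ} (hm : MapsTo g (Icc a b) (Icc a b))
    (hfg : EqOn f g (Icc a b)) (n : ℕ) : ∀ x ∈ Icc a b, f^[n] x = g^[n] x := by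
  induction n with
  | zero => intro x _; rfl
  | succ n ih =>
    intro x hx
    rw [Function.iterate_succ_apply, Function.iterate_succ_apply, hfg hx]
    exact ih _ (hm hx)

lemma cover_upper {f g : ℝ → ℝ} {C : Finset ℝ} (h : PM g C) {a b : ℝ} (hab : a < b)
    (hm : MapsTo g (Icc a b) (Icc a b)) (hfg : EqOn f g (Icc a b)) (U : SetRel ℝ ℝ)
    (hU : U ∈ uniformity ℝ) : ∃ K : ℕ, ∀ n, Dynamics.coverMincard f (Icc a b) U n ≤
      (((n * K + 1) * ((Q g C a b n).ncard + 1) : ℕ) : ℕ∞) := by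
  classical
  obtain ⟨ε, hε, hεU⟩ := Metric.mem_uniformity_dist.1 hU
  obtain ⟨D, hD⟩ := grid a b ε hε
  refine ⟨D.card, fun n => ?_⟩
  obtain ⟨hfin, hcard⟩ := QD_bound h a b D n n le_rfl
  set S : Finset ℝ := insert a hfin.toFinset with hS
  have hcov : Dynamics.IsDynCoverOf f (Icc a b) U n (S : Set ℝ) := by
    intro x hx
    obtain ⟨z, hz, hzmax⟩ := (S.filter (· ≤ x)).exists_max_image id
      ⟨a, by simp [hS, hx.1]⟩
    rw [Finset.mem_filter] at hz
    have hzI : z ∈ Icc a b := by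
      refine ⟨?_, hz.2.trans hx.2⟩
      have := hz.1
      rw [hS, Finset.mem_insert] at this
      rcases this with rfl | h'
      · exact le_rfl
      · exact ((Set.Finite.mem_toFinset hfin).1 h').1.1
    refine ⟨z, hz.1, ?_⟩
    rw [Dynamics.mem_dynEntourage]
    intro j hj
    apply hεU
    rw [iter_eq hm hfg j x hx, iter_eq hm hfg j z hzI, Real.dist_eq]
    by_contra hcon
    push Not at hcon
    have hx' := hm.iterate j hx
    have hz' := hm.iterate j hzI
    have hbtw : ∃ d ∈ D, d ∈ Ioo (min (g^[j] z) (g^[j] x)) (max (g^[j] z) (g^[j] x)) := by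
      rcases le_total (g^[j] z) (g^[j] x) with h' | h'
      · rw [min_eq_left h', max_eq_right h']
        rw [abs_of_nonneg (by linarith)] at hcon
        exact hD _ _ hz' hx' (by linarith)
      · rw [min_eq_right h', max_eq_left h']
        rw [abs_of_nonpos (by linarith)] at hcon
        exact hD _ _ hx' hz' (by linarith)
    obtain ⟨d, hdD, hd⟩ := hbtw
    obtain ⟨w, hw, hwd⟩ := sortmap (h.1.iterate j) hz.2 hd
    have hwS : w ∈ S := by
      rw [hS, Finset.mem_insert, Set.Finite.mem_toFinset]
      exact Or.inr ⟨⟨hzI.1.trans hw.1.le, hw.2.le.trans hx.2⟩, j, hj, by rw [hwd]; exact hdD⟩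
    have := hzmax w (Finset.mem_filter.2 ⟨hwS, hw.2.le⟩)
    exact absurd this (not_le.2 hw.1)
  refine hcov.coverMincard_le_card.trans ?_
  norm_cast
  have h1 : S.card ≤ (Q g D a b n).ncard + 1 := by
    rw [Set.ncard_eq_toFinset_card _ hfin]
    exact Finset.card_insert_le _ _
  nlinarith

lemma entropy_upper {f g : ℝ → ℝ} {C : Finset ℝ} (h : PM g C) {a b : ℝ} (hab : a < b)
    (hm : MapsTo g (Icc a b) (Icc a b)) (hfg : EqOn f g (Icc a b)) (s : ℝ)
    (hs : ∀ r > s, ∀ᶠ n : ℕ in atTop, L g C a b n ≤ Real.exp (r * n)) :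
    Dynamics.coverEntropy f (Icc a b) ≤ (s : EReal) := by
  refine iSup₂_le fun U hU => ?_
  obtain ⟨K, hK⟩ := cover_upper h hab hm hfg U hU
  apply ExpGrowth.expGrowthSup_le_iff.2
  intro c hc
  obtain ⟨r, hr1, hr2⟩ := EReal.lt_iff_exists_real_btwn.1 hc
  have hr1 : s < r := by exact_mod_cast hr1
  have hlim : Tendsto (fun n : ℕ => ((n:ℝ) * K + 1) * Real.exp (-((r - s)/2 * n))) atTop (𝓝 0) := by
    have h1 : Tendsto (fun n : ℕ => ((n:ℝ)) * Real.exp (-((r - s)/2) * n)) atTop (𝓝 0) := by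
      have := Real.tendsto_pow_mul_exp_neg_atTop_nhds_zero 1
      have h2 := (this.comp (tendsto_natCast_atTop_atTop.const_mul_atTop
        (show 0 < (r-s)/2 by linarith))).const_mul (((r-s)/2)⁻¹)
      simp only [mul_zero] at h2
      refine h2.congr fun n => ?_
      have : (r - s) ≠ 0 := by linarith
      simp only [Function.comp, pow_one]
      field_simp
    have h3 : Tendsto (fun n : ℕ => Real.exp (-((r - s)/2 * n))) atTop (𝓝 0) :=
      Real.tendsto_exp_neg_atTop_nhds_zero.comp (tendsto_natCast_atTop_atTop.const_mul_atTop
        (show 0 < (r-s)/2 by linarith))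
    have h4 := (h1.const_mul (K:ℝ)).add h3
    simp only [mul_zero, add_zero] at h4
    refine h4.congr fun n => ?_
    rw [neg_mul]; ring
  filter_upwards [hs ((r+s)/2) (by linarith), hlim.eventually (gt_mem_nhds one_pos)] with n h1 h2
  have h5 : ((n * K + 1) * ((Q g C a b n).ncard + 1) : ℝ) ≤ Real.exp (r * n) := by
    calc ((n * K + 1) * ((Q g C a b n).ncard + 1) : ℝ)
        ≤ (n * K + 1) * Real.exp ((r+s)/2 * n) := by
          apply mul_le_mul_of_nonneg_left h1; positivity
      _ = ((n * K + 1) * Real.exp (-((r - s)/2 * n))) * Real.exp (r * n) := by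
          rw [mul_assoc, ← Real.exp_add]; congr 2; ring
      _ ≤ 1 * Real.exp (r * n) := by gcongr
      _ = _ := one_mul _
  calc ((Dynamics.coverMincard f (Icc a b) U n : ℕ∞) : ENNReal)
      ≤ ((((n * K + 1) * ((Q g C a b n).ncard + 1) : ℕ) : ℕ∞) : ENNReal) :=
        ENat.toENNReal_mono (hK n)
    _ = ENNReal.ofReal (((n * K + 1) * ((Q g C a b n).ncard + 1) : ℕ) : ℝ) := by
        rw [ENNReal.ofReal_natCast, ENat.toENNReal_coe]
    _ ≤ ENNReal.ofReal (Real.exp (r * n)) := ENNReal.ofReal_le_ofReal (by push_cast; exact h5)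
    _ = EReal.exp (((r * n : ℝ)) : EReal) := (EReal.exp_coe _).symm
    _ ≤ EReal.exp (c * n) := by
        apply EReal.exp_monotone
        push_cast
        exact mul_le_mul_of_nonneg_right hr2.le (by exact_mod_cast Nat.zero_le n)

end Knead

namespace Knead

lemma iter_mono {g : ℝ → ℝ} {C : Finset ℝ} (h : PM g C) (n : ℕ) (u v : ℝ) (huv : u < v)
    (hz : ∀ z ∈ Ioo u v, ∀ j < n, g^[j] z ∉ C) :
    StrictMonoOn g^[n] (Icc u v) ∨ StrictAntiOn g^[n] (Icc u v) := by
  apply ContinuousOn.strictMonoOn_of_injOn_Icc' huv.le (h.1.iterate n).continuousOn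
  have key : ∀ x ∈ Icc u v, ∀ y ∈ Icc u v, x < y → g^[n] x ≠ g^[n] y := fun x hx y hy hxy =>
    iter_ne h n x y hxy fun z hz' => hz z ⟨lt_of_le_of_lt hx.1 hz'.1, lt_of_lt_of_le hz'.2 hy.2⟩
  intro x hx y hy hxy
  rcases lt_trichotomy x y with h1 | h1 | h1
  · exact absurd hxy (key x hx y hy h1)
  · exact h1
  · exact absurd hxy.symm (key y hy x hx h1)

lemma sep (S : Set ℝ) (hS : S.Finite) : ∃ δ > 0, ∀ x ∈ S, ∀ y ∈ S, |x - y| < 2 * δ → x = y := by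
  classical
  set T := (hS.toFinset ×ˢ hS.toFinset).filter (fun p => p.1 ≠ p.2) with hT
  rcases T.eq_empty_or_nonempty with h | h
  · refine ⟨1, one_pos, fun x hx y hy _ => ?_⟩
    by_contra hne
    have : (x, y) ∈ T := by simp [hT, hx, hy, hne]
    rw [h] at this; simp at this
  · obtain ⟨p, hp, hmin⟩ := T.exists_min_image (fun p => |p.1 - p.2|) h
    have hp' : p.1 ≠ p.2 := by simp [hT] at hp; exact hp.2
    refine ⟨|p.1 - p.2| / 2, half_pos (abs_pos.2 (sub_ne_zero.2 hp')), fun x hx y hy hxy => ?_⟩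
    by_contra hne
    have : (x, y) ∈ T := by simp [hT, hx, hy, hne]
    have := hmin _ this
    simp only at this
    linarith

lemma cover_lower {f g : ℝ → ℝ} {C : Finset ℝ} (h : PM g C) {a b : ℝ}
    (hm : MapsTo g (Icc a b) (Icc a b)) (hfg : EqOn f g (Icc a b)) (k : ℕ) (hk : 0 < k) :
    ∃ U ∈ uniformity ℝ, ∀ N (s : Finset ℝ), Dynamics.IsDynCoverOf f (Icc a b) U N s →
      (Q g C a b N).ncard ≤ s.card * 4 ^ (N / k + 1) := by
  classical
  obtain ⟨δ, hδ, hsep⟩ := sep _ (Q_finite h a b k)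
  refine ⟨{p | dist p.1 p.2 < δ}, Metric.dist_mem_uniformity hδ, fun N s hs => ?_⟩
  have hch : ∀ z ∈ Q g C a b N, ∃ x ∈ s, ∀ j < N, |g^[j] z - f^[j] x| < δ := by
    intro z hz
    obtain ⟨x, hx, hzx⟩ := hs hz.1
    refine ⟨x, hx, fun j hj => ?_⟩
    have := (Dynamics.mem_dynEntourage.1 hzx) j hj
    rw [iter_eq hm hfg j z hz.1] at this
    exact this
  choose! ctr hctr hclose using hch
  set B1 : ℝ → Finset ℕ := fun z => (Finset.range (N / k + 1)).filter (fun q =>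
    ∃ w ∈ Q g C a b k, |w - f^[q * k] (ctr z)| < δ ∧ w < g^[q * k] z) with hB1
  set B2 : ℝ → Finset ℕ := fun z => (Finset.range (N / k + 1)).filter (fun q =>
    ∃ w ∈ Q g C a b k, |w - f^[q * k] (ctr z)| < δ ∧ w ≤ g^[q * k] z) with hB2
  set φ : ℝ → ℝ × Finset ℕ × Finset ℕ := fun z => (ctr z, B1 z, B2 z) with hφ
  set R := s ×ˢ ((Finset.range (N / k + 1)).powerset ×ˢ (Finset.range (N / k + 1)).powerset) with hR
  have hmaps : MapsTo φ (Q g C a b N) (R : Set _) := by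
    intro z hz
    simp only [hR, hφ, hB1, hB2, Finset.coe_product, mem_prod, Finset.mem_coe, Finset.mem_powerset]
    exact ⟨hctr z hz, Finset.filter_subset _ _, Finset.filter_subset _ _⟩
  have hlt : ∀ z ∈ Q g C a b N, ∀ z' ∈ Q g C a b N, z < z' → φ z ≠ φ z' := by
    intro z hz z' hz' hlt heq
    simp only [hφ, Prod.mk.injEq] at heq
    obtain ⟨e0, e1, e2⟩ := heq
    have hex : ∃ q, ∃ ζ ∈ Ioc z z', g^[q * k] ζ ∈ Q g C a b k ∧ q * k < N := by
      obtain ⟨hI, j, hj, hc⟩ := hz'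
      refine ⟨j / k, z', ⟨hlt, le_rfl⟩, ⟨hm.iterate _ hI, j % k, Nat.mod_lt _ hk, ?_⟩,
        lt_of_le_of_lt (Nat.div_mul_le_self j k) hj⟩
      rw [← Function.iterate_add_apply]
      have : j % k + j / k * k = j := Nat.mod_add_div' j k
      rw [this]; exact hc
    obtain ⟨ζ, hζ, hζQ, hqN⟩ := Nat.find_spec hex
    set q := Nat.find hex with hq
    have hIcc : ∀ y ∈ Icc z z', y ∈ Icc a b := fun y hy =>
      ⟨hz.1.1.trans hy.1, hy.2.trans hz'.1.2⟩
    have hmono := iter_mono h (q * k) z z' hlt (by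
      intro y hy j hj hc
      have hjq : j / k < q := by rw [Nat.div_lt_iff_lt_mul hk]; exact hj
      refine Nat.find_min hex hjq ⟨y, ⟨hy.1, hy.2.le⟩, ⟨hm.iterate _ (hIcc y ⟨hy.1.le, hy.2.le⟩),
        j % k, Nat.mod_lt _ hk, ?_⟩, lt_of_le_of_lt (Nat.div_mul_le_self j k) (hj.trans hqN)⟩
      rw [← Function.iterate_add_apply]
      have : j % k + j / k * k = j := Nat.mod_add_div' j k
      rw [this]; exact hc)
    set w := g^[q * k] ζ with hw
    have hqr : q ∈ Finset.range (N / k + 1) := by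
      rw [Finset.mem_range, Nat.lt_succ_iff, Nat.le_div_iff_mul_le hk]; exact hqN.le
    have c1 := hclose z hz (q * k) hqN
    have c2 := hclose z' hz' (q * k) hqN
    rw [← e0] at c2
    set x := f^[q * k] (ctr z) with hx
    have huniq : ∀ w' ∈ Q g C a b k, |w' - x| < δ → |w - x| < δ → w' = w := by
      intro w' hw' h1 h2
      apply hsep w' hw' w hζQ
      rw [abs_lt] at *
      constructor <;> linarith [h1.1, h1.2, h2.1, h2.2]
    have m1 : ∀ y, y = z ∨ y = z' → (q ∈ B1 y ↔ ∃ w ∈ Q g C a b k, |w - x| < δ ∧ w < g^[q * k] y) := by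
      rintro y (rfl | rfl)
      · simp only [hB1, Finset.mem_filter, hqr, true_and, hx]
      · simp only [hB1, Finset.mem_filter, hqr, true_and, hx, e0]
    have m2 : ∀ y, y = z ∨ y = z' → (q ∈ B2 y ↔ ∃ w ∈ Q g C a b k, |w - x| < δ ∧ w ≤ g^[q * k] y) := by
      rintro y (rfl | rfl)
      · simp only [hB2, Finset.mem_filter, hqr, true_and, hx]
      · simp only [hB2, Finset.mem_filter, hqr, true_and, hx, e0]
    have hzm : z ∈ Icc z z' := ⟨le_rfl, hlt.le⟩
    have hzm' : z' ∈ Icc z z' := ⟨hlt.le, le_rfl⟩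
    have hζm : ζ ∈ Icc z z' := ⟨hζ.1.le, hζ.2⟩
    rw [abs_lt] at c1 c2
    rcases hmono with hmo | hmo
    · have i1 : g^[q * k] z < w := hmo hzm hζm hζ.1
      have i2 : w ≤ g^[q * k] z' := hmo.monotoneOn hζm hzm' hζ.2
      have hwx : |w - x| < δ := by rw [abs_lt]; constructor <;> linarith [c1.1, c1.2, c2.1, c2.2]
      have : q ∈ B2 z' := (m2 z' (Or.inr rfl)).2 ⟨w, hζQ, hwx, i2⟩
      rw [← e2] at this
      obtain ⟨w', hw', h1, h2⟩ := (m2 z (Or.inl rfl)).1 this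
      rw [huniq w' hw' h1 hwx] at h2
      linarith
    · have i1 : w < g^[q * k] z := hmo hzm hζm hζ.1
      have i2 : g^[q * k] z' ≤ w := hmo.antitoneOn hζm hzm' hζ.2
      have hwx : |w - x| < δ := by rw [abs_lt]; constructor <;> linarith [c1.1, c1.2, c2.1, c2.2]
      have : q ∈ B1 z := (m1 z (Or.inl rfl)).2 ⟨w, hζQ, hwx, i1⟩
      rw [e1] at this
      obtain ⟨w', hw', h1, h2⟩ := (m1 z' (Or.inr rfl)).1 this
      rw [huniq w' hw' h1 hwx] at h2
      linarith
  have hinj : InjOn φ (Q g C a b N) := by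
    intro x hx y hy hxy
    rcases lt_trichotomy x y with h1 | h1 | h1
    · exact absurd hxy (hlt x hx y hy h1)
    · exact h1
    · exact absurd hxy.symm (hlt y hy x hx h1)
  have := Set.ncard_le_ncard_of_injOn φ hmaps hinj (Finset.finite_toSet _)
  rw [Set.ncard_coe_finset, hR, Finset.card_product, Finset.card_product, Finset.card_powerset,
    Finset.card_range, ← mul_pow] at this
  exact this

lemma entropy_lower {f g : ℝ → ℝ} {C : Finset ℝ} (h : PM g C) {a b : ℝ}
    (hm : MapsTo g (Icc a b) (Icc a b)) (hfg : EqOn f g (Icc a b)) (s : ℝ)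
    (hs : ∀ n : ℕ, Real.exp (s * n) ≤ L g C a b n) (r : ℝ) (hr : 0 ≤ r) (hrs : r < s) :
    (r : EReal) ≤ Dynamics.coverEntropy f (Icc a b) := by
  obtain ⟨k, hk⟩ := exists_nat_gt (2 * Real.log 4 / (s - r))
  have hl4 : 0 < Real.log 4 := Real.log_pos (by norm_num)
  have hk0 : 0 < k := by
    have : (0:ℝ) < k := lt_trans (div_pos (by positivity) (by linarith)) hk
    exact_mod_cast this
  have hkR : (0:ℝ) < k := by exact_mod_cast hk0
  have hk' : Real.log 4 / k < (s - r) / 2 := by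
    rw [div_lt_iff₀ (by linarith)] at hk
    rw [div_lt_iff₀ hkR]; linarith
  obtain ⟨U, hU, hcov⟩ := cover_lower h hm hfg k hk0
  refine le_trans ?_ (Dynamics.coverEntropyEntourage_le_coverEntropy f (Icc a b) hU)
  apply Frequently.le_expGrowthSup
  apply Eventually.frequently
  have hlim : Tendsto (fun n : ℕ => Real.exp ((s - r)/2 * n)) atTop atTop :=
    Real.tendsto_exp_atTop.comp (tendsto_natCast_atTop_atTop.const_mul_atTop
        (show 0 < (s-r)/2 by linarith))
  filter_upwards [hlim.eventually_ge_atTop 5] with n hn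
  by_cases htop : Dynamics.coverMincard f (Icc a b) U n = ⊤
  · rw [htop]; simp
  obtain ⟨t, ht, htc⟩ := (Dynamics.coverMincard_finite_iff f (Icc a b) U n).1 (lt_top_iff_ne_top.2 htop)
  rw [← htc]
  have hb := hcov n t ht
  have hb' : ((Q g C a b n).ncard : ℝ) ≤ t.card * 4 ^ (n / k + 1) := by exact_mod_cast hb
  have hp : (4:ℝ) ^ (n / k + 1) ≤ 4 * Real.exp ((s - r)/2 * n) := by
    rw [pow_succ, mul_comm]
    gcongr
    rw [← Real.rpow_natCast, Real.rpow_def_of_pos (by norm_num)]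
    apply Real.exp_le_exp.2
    calc Real.log 4 * ((n / k : ℕ) : ℝ) ≤ Real.log 4 * (n / k) := by
          gcongr; exact Nat.cast_div_le
      _ = Real.log 4 / k * n := by ring
      _ ≤ _ := by gcongr
  have hfin : Real.exp (r * n) ≤ t.card := by
    set E := Real.exp ((s - r)/2 * n) with hE
    have hL := hs n
    unfold L at hL
    have e1 : Real.exp (s * n) = Real.exp (r * n) * E * E := by
      rw [hE, ← Real.exp_add, ← Real.exp_add]; congr 1; ring
    have hr1 : 1 ≤ Real.exp (r * n) := Real.one_le_exp (by positivity)
    have h6 : ((Q g C a b n).ncard : ℝ) ≤ t.card * (4 * E) := hb'.trans (by gcongr)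
    by_contra hcon
    push Not at hcon
    set X := Real.exp (r * n)
    have h7 : (t.card : ℝ) * (4 * E) ≤ X * (4 * E) := by gcongr
    have : X * E * E ≥ X * E * 5 := by gcongr
    nlinarith [mul_le_mul hr1 hn (by norm_num) (by linarith)]
  calc EReal.exp ((r : EReal) * n) = EReal.exp (((r * n : ℝ)) : EReal) := by push_cast; rfl
    _ = ENNReal.ofReal (Real.exp (r * n)) := EReal.exp_coe _
    _ ≤ ENNReal.ofReal (t.card : ℝ) := ENNReal.ofReal_le_ofReal hfin
    _ = _ := by rw [ENNReal.ofReal_natCast, ENat.toENNReal_coe]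

lemma entropy_eq {f g : ℝ → ℝ} {C : Finset ℝ} (h : PM g C) {a b : ℝ} (hab : a < b)
    (hm : MapsTo g (Icc a b) (Icc a b)) (hfg : EqOn f g (Icc a b)) (s : ℝ) (hs0 : 0 ≤ s)
    (hs : ∀ n : ℕ, Real.exp (s * n) ≤ L g C a b n)
    (hs' : ∀ r > s, ∀ᶠ n : ℕ in atTop, L g C a b n ≤ Real.exp (r * n)) :
    Dynamics.coverEntropy f (Icc a b) = (s : EReal) := by
  apply le_antisymm (entropy_upper h hab hm hfg s hs')
  apply le_of_forall_lt
  intro c hc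
  rcases hs0.eq_or_lt with h0 | h0
  · refine lt_of_lt_of_le hc ?_
    rw [← h0]
    exact Dynamics.coverEntropy_nonneg f ⟨a, le_rfl, hab.le⟩
  · obtain ⟨r, hr1, hr2⟩ := EReal.lt_iff_exists_real_btwn.1 hc
    have hr2 : r < s := by exact_mod_cast hr2
    refine lt_of_lt_of_le hr1 (le_trans ?_
      (entropy_lower h hm hfg s hs (max r 0) (le_max_right _ _) (max_lt hr2 h0)))
    exact_mod_cast le_max_left _ _

end Knead

namespace Knead

open Classical in
/-- direction of `g` on the given side of a point -/
noncomputable def sg (g : ℝ → ℝ) (p : ℝ × ℤˣ) : ℤˣ :=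
  if (p.2 = 1 ∧ ∃ y > p.1, StrictMonoOn g (Icc p.1 y)) ∨
    (p.2 = -1 ∧ ∃ y < p.1, StrictMonoOn g (Icc y p.1)) then 1 else -1

/-- induced dynamics on one-sided germs -/
noncomputable def F (g : ℝ → ℝ) (p : ℝ × ℤˣ) : ℝ × ℤˣ := (g p.1, p.2 * sg g p)

open Classical in
/-- is the germ to the right of `c` -/
noncomputable def Hc (c : ℝ) (p : ℝ × ℤˣ) : ℤ :=
  if c < p.1 ∨ (c = p.1 ∧ p.2 = 1) then 1 else 0

/-- coefficients of the kneading coordinate -/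
noncomputable def K (g : ℝ → ℝ) (c : ℝ) : ℕ → ℝ × ℤˣ → ℤ
  | 0, p => Hc c p
  | n + 1, p => (sg g p : ℤ) * K g c n (F g p)

lemma one_ne_neg : (1 : ℤˣ) ≠ -1 := by decide

lemma not_mono_anti {g : ℝ → ℝ} {u v : ℝ} (huv : u < v) (h1 : StrictMonoOn g (Icc u v))
    (h2 : StrictAntiOn g (Icc u v)) : False := by
  have a1 := h1 (left_mem_Icc.2 huv.le) (right_mem_Icc.2 huv.le) huv
  have a2 := h2 (left_mem_Icc.2 huv.le) (right_mem_Icc.2 huv.le) huv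
  exact lt_asymm a1 a2

lemma sg_spec {g : ℝ → ℝ} {C : Finset ℝ} (h : PM g C) {u v : ℝ} (huv : u < v)
    (hC : ∀ x ∈ C, x ∉ Ioo u v) :
    (sg g (u, 1) = 1 ∧ sg g (v, -1) = 1 ∧ StrictMonoOn g (Icc u v)) ∨
    (sg g (u, 1) = -1 ∧ sg g (v, -1) = -1 ∧ StrictAntiOn g (Icc u v)) := by
  rcases h.2 u v huv hC with hm | hm
  · left
    refine ⟨?_, ?_, hm⟩
    · rw [sg, if_pos]; exact Or.inl ⟨rfl, v, huv, hm⟩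
    · rw [sg, if_pos]; exact Or.inr ⟨rfl, u, huv, hm⟩
  · right
    refine ⟨?_, ?_, hm⟩
    · rw [sg, if_neg]
      rintro (⟨_, y, hy, hmy⟩ | ⟨h1, _⟩)
      · exact not_mono_anti (lt_min hy huv) (hmy.mono (Icc_subset_Icc le_rfl (min_le_left _ _)))
          (hm.mono (Icc_subset_Icc le_rfl (min_le_right _ _)))
      · exact one_ne_neg h1
    · rw [sg, if_neg]
      rintro (⟨h1, _⟩ | ⟨_, y, hy, hmy⟩)
      · exact one_ne_neg h1.symm
      · exact not_mono_anti (max_lt hy huv) (hmy.mono (Icc_subset_Icc (le_max_left _ _) le_rfl))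
          (hm.mono (Icc_subset_Icc (le_max_right _ _) le_rfl))

/-- points of `(u,v)` hitting `C` for the first time at time `n`, at `w` -/
def Gs (g : ℝ → ℝ) (C : Finset ℝ) (w : ℝ) (n : ℕ) (u v : ℝ) : Set ℝ :=
  {z | z ∈ Ioo u v ∧ g^[n] z = w ∧ ∀ k < n, g^[k] z ∉ C}

lemma Gs_finite {g : ℝ → ℝ} {C : Finset ℝ} (h : PM g C) {w : ℝ} (hw : w ∈ C) (n : ℕ) (u v : ℝ) :
    (Gs g C w n u v).Finite :=
  (Q_finite h u v (n+1)).subset fun _ hz =>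
    ⟨⟨hz.1.1.le, hz.1.2.le⟩, n, Nat.lt_succ_self n, by rw [hz.2.1]; exact hw⟩

lemma Gs_split {g : ℝ → ℝ} {C : Finset ℝ} (h : PM g C) {w : ℝ} (hw : w ∈ C) (n : ℕ) {u v x : ℝ}
    (hx : x ∈ C) (hux : u < x) (hxv : x < v) :
    (Gs g C w n u v).ncard = (Gs g C w n u x).ncard + (Gs g C w n x v).ncard +
      (if n = 0 ∧ x = w then 1 else 0) := by
  have hx' : (Gs g C w n u v ∩ {x}).ncard = (if n = 0 ∧ x = w then 1 else 0) := by
    split_ifs with hc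
    · have : Gs g C w n u v ∩ {x} = {x} := by
        apply inter_eq_right.2
        rintro y rfl
        refine ⟨⟨hux, hxv⟩, ?_, ?_⟩
        · rw [hc.1]; exact hc.2
        · intro k hk; rw [hc.1] at hk; omega
      rw [this, Set.ncard_singleton]
    · rw [Set.ncard_eq_zero ((Gs_finite h hw n u v).inter_of_left _)]
      rw [Set.eq_empty_iff_forall_notMem]
      rintro y ⟨hy, rfl⟩
      apply hc
      rcases Nat.eq_zero_or_pos n with rfl | hn
      · exact ⟨rfl, hy.2.1⟩
      · exact absurd hx (hy.2.2 0 hn)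
  have e : Gs g C w n u v = (Gs g C w n u x ∪ Gs g C w n x v) ∪ (Gs g C w n u v ∩ {x}) := by
    ext z
    constructor
    · intro hz
      rcases lt_trichotomy z x with h1 | h1 | h1
      · exact Or.inl (Or.inl ⟨⟨hz.1.1, h1⟩, hz.2⟩)
      · exact Or.inr ⟨hz, h1⟩
      · exact Or.inl (Or.inr ⟨⟨h1, hz.1.2⟩, hz.2⟩)
    · rintro ((hz | hz) | hz)
      · exact ⟨⟨hz.1.1, hz.1.2.trans hxv⟩, hz.2⟩
      · exact ⟨⟨hux.trans hz.1.1, hz.1.2⟩, hz.2⟩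
      · exact hz.1
  have d1 : Disjoint (Gs g C w n u x) (Gs g C w n x v) := by
    rw [Set.disjoint_left]
    intro z h1 h2
    exact lt_asymm h1.1.2 h2.1.1
  have d2 : Disjoint (Gs g C w n u x ∪ Gs g C w n x v) (Gs g C w n u v ∩ {x}) := by
    rw [Set.disjoint_left]
    rintro z (h1 | h1) ⟨_, rfl⟩
    · exact lt_irrefl _ h1.1.2
    · exact lt_irrefl _ h1.1.1
  have f1 := Gs_finite h hw n u x
  have f2 := Gs_finite h hw n x v
  rw [← hx', ← Set.ncard_union_eq d1 f1 f2, ← Set.ncard_union_eq d2 (f1.union f2)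
    ((Gs_finite h hw n u v).inter_of_left _), ← e]

lemma Gs_zero {g : ℝ → ℝ} {C : Finset ℝ} {w : ℝ} (hw : w ∈ C) {u v : ℝ}
    (hC : ∀ x ∈ C, x ∉ Ioo u v) : (Gs g C w 0 u v).ncard = 0 := by
  have : Gs g C w 0 u v = ∅ := by
    rw [Set.eq_empty_iff_forall_notMem]
    rintro y ⟨hy, rfl, _⟩
    exact hC _ hw hy
  rw [this, Set.ncard_empty]

lemma Gs_succ {g : ℝ → ℝ} {C : Finset ℝ} (h : PM g C) (w : ℝ) (n : ℕ) {u v : ℝ} (huv : u < v)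
    (hC : ∀ x ∈ C, x ∉ Ioo u v) :
    (Gs g C w (n+1) u v).ncard =
      (Gs g C w n (min (g u) (g v)) (max (g u) (g v))).ncard := by
  have hinj : InjOn g (Icc u v) := by
    rcases h.2 u v huv hC with hm | hm
    · exact hm.injOn
    · exact hm.injOn
  have hio : ∀ z ∈ Ioo u v, g z ∈ Ioo (min (g u) (g v)) (max (g u) (g v)) := by
    intro z hz
    have hl := left_mem_Icc.2 huv.le
    have hr := right_mem_Icc.2 huv.le
    have hzI : z ∈ Icc u v := ⟨hz.1.le, hz.2.le⟩
    rcases h.2 u v huv hC with hm | hm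
    · exact ⟨min_lt_of_left_lt (hm hl hzI hz.1), lt_max_of_lt_right (hm hzI hr hz.2)⟩
    · exact ⟨min_lt_of_right_lt (hm hzI hr hz.2), lt_max_of_lt_left (hm hl hzI hz.1)⟩
  have e : Gs g C w n (min (g u) (g v)) (max (g u) (g v)) = g '' Gs g C w (n+1) u v := by
    ext y
    constructor
    · rintro ⟨hy, hyw, hyC⟩
      obtain ⟨z, hz, rfl⟩ := sortmap h.1 huv.le hy
      refine ⟨z, ⟨hz, hyw, ?_⟩, rfl⟩
      intro k hk
      rcases k with _ | k
      · exact fun hc => hC z hc hz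
      · exact hyC k (by omega)
    · rintro ⟨z, ⟨hz, hzw, hzC⟩, rfl⟩
      exact ⟨hio z hz, hzw, fun k hk => hzC (k+1) (by omega)⟩
  have hsub : Gs g C w (n+1) u v ⊆ Icc u v := fun z hz => ⟨hz.1.1.le, hz.1.2.le⟩
  rw [e, Set.InjOn.ncard_image (hinj.mono hsub)]

/-- kneading increments -/
noncomputable def nu (g : ℝ → ℝ) (c w : ℝ) (n : ℕ) : ℤ := K g c n (w, 1) - K g c n (w, -1)

/-- right-hand side of the main kneading identity -/
noncomputable def rhs (g : ℝ → ℝ) (C : Finset ℝ) (c : ℝ) (N : ℕ) (u v : ℝ) : ℤ :=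
  ∑ n ∈ Finset.range (N+1), ∑ w ∈ C, ((Gs g C w n u v).ncard : ℤ) * nu g c w (N - n)

lemma rhs_split {g : ℝ → ℝ} {C : Finset ℝ} (h : PM g C) (c : ℝ) (N : ℕ) {u v x : ℝ}
    (hx : x ∈ C) (hux : u < x) (hxv : x < v) :
    rhs g C c N u v = rhs g C c N u x + rhs g C c N x v + nu g c x N := by
  have e : ∀ n ∈ Finset.range (N+1), ∑ w ∈ C, ((Gs g C w n u v).ncard : ℤ) * nu g c w (N - n) =
      ∑ w ∈ C, ((Gs g C w n u x).ncard : ℤ) * nu g c w (N - n) +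
      ∑ w ∈ C, ((Gs g C w n x v).ncard : ℤ) * nu g c w (N - n) +
      (if n = 0 then nu g c x N else 0) := by
    intro n _
    have e1 : (if n = 0 then nu g c x N else 0) =
        ∑ w ∈ C, (if n = 0 ∧ x = w then (1:ℤ) else 0) * nu g c w (N - n) := by
      rcases Nat.eq_zero_or_pos n with rfl | hn
      · simp [hx]
      · simp [hn.ne']
    rw [e1, ← Finset.sum_add_distrib, ← Finset.sum_add_distrib]
    refine Finset.sum_congr rfl fun w hw => ?_
    rw [Gs_split h hw n hx hux hxv]
    push_cast
    ring
  unfold rhs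
  rw [Finset.sum_congr rfl e, Finset.sum_add_distrib, Finset.sum_add_distrib]
  congr 1
  simp

lemma kneading_of_base {g : ℝ → ℝ} {C : Finset ℝ} (h : PM g C) (c : ℝ) (N : ℕ)
    (base : ∀ u v, u < v → (∀ x ∈ C, x ∉ Ioo u v) →
      K g c N (v, -1) - K g c N (u, 1) = rhs g C c N u v) :
    ∀ (k : ℕ) (u v : ℝ), (C.filter (fun x => u < x ∧ x < v)).card = k → u < v →
      K g c N (v, -1) - K g c N (u, 1) = rhs g C c N u v := by
  intro k
  induction k using Nat.strong_induction_on with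
  | _ k ih =>
    intro u v hk huv
    by_cases hC : ∀ x ∈ C, x ∉ Ioo u v
    · exact base u v huv hC
    · push Not at hC
      obtain ⟨x, hx, hux, hxv⟩ := hC
      have h1 : (C.filter (fun y => u < y ∧ y < x)).card < k := by
        rw [← hk]
        apply Finset.card_lt_card
        rw [Finset.ssubset_iff_of_subset]
        · exact ⟨x, by simp [hx, hux, hxv], by simp⟩
        · intro y hy
          simp only [Finset.mem_filter] at hy ⊢
          exact ⟨hy.1, hy.2.1, hy.2.2.trans hxv⟩
      have h2 : (C.filter (fun y => x < y ∧ y < v)).card < k := by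
        rw [← hk]
        apply Finset.card_lt_card
        rw [Finset.ssubset_iff_of_subset]
        · exact ⟨x, by simp [hx, hux, hxv], by simp⟩
        · intro y hy
          simp only [Finset.mem_filter] at hy ⊢
          exact ⟨hy.1, hux.trans hy.2.1, hy.2.2⟩
      have e1 := ih _ h1 u x rfl hux
      have e2 := ih _ h2 x v rfl hxv
      rw [rhs_split h c N hx hux hxv, ← e1, ← e2, nu]
      ring

lemma kneading {g : ℝ → ℝ} {C : Finset ℝ} (h : PM g C) {c : ℝ} (hc : c ∈ C) : ∀ (N : ℕ) (u v : ℝ),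
    u < v → K g c N (v, -1) - K g c N (u, 1) = rhs g C c N u v := by
  intro N
  induction N with
  | zero =>
    intro u v huv
    refine kneading_of_base h c 0 ?_ _ u v rfl huv
    intro u v huv hC
    have h1 : rhs g C c 0 u v = 0 := by
      simp only [rhs, zero_add, Finset.range_one, Finset.sum_singleton]
      exact Finset.sum_eq_zero fun w hw => by rw [Gs_zero hw hC]; simp
    rw [h1]
    have h2 := hC c hc
    simp only [K, Hc, one_ne_neg.symm, and_false, or_false, and_true]
    have : (c < v) ↔ (c < u ∨ c = u) := by
      rw [← le_iff_lt_or_eq]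
      constructor
      · intro h3; by_contra h4; exact h2 ⟨not_le.1 h4, h3⟩
      · intro h3; exact lt_of_le_of_lt h3 huv
    simp [this]
  | succ N ih =>
    intro u v huv
    refine kneading_of_base h c (N+1) ?_ _ u v rfl huv
    intro u v huv hC
    have h1 : rhs g C c (N+1) u v = rhs g C c N (min (g u) (g v)) (max (g u) (g v)) := by
      unfold rhs
      rw [Finset.sum_range_succ']
      have : ∑ w ∈ C, ((Gs g C w 0 u v).ncard : ℤ) * nu g c w (N + 1 - 0) = 0 :=
        Finset.sum_eq_zero fun w hw => by rw [Gs_zero hw hC]; simp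
      rw [this, add_zero]
      refine Finset.sum_congr rfl fun n _ => Finset.sum_congr rfl fun w _ => ?_
      rw [Gs_succ h w n huv hC, Nat.add_sub_add_right]
    rw [h1]
    have hl := left_mem_Icc.2 huv.le
    have hr := right_mem_Icc.2 huv.le
    rcases sg_spec h huv hC with ⟨s1, s2, hm⟩ | ⟨s1, s2, hm⟩
    · have hlt := hm hl hr huv
      rw [min_eq_left hlt.le, max_eq_right hlt.le, ← ih _ _ hlt]
      simp [K, F, s1, s2]
    · have hlt := hm hl hr huv
      rw [min_eq_right hlt.le, max_eq_left hlt.le, ← ih _ _ hlt]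
      simp [K, F, s1, s2]
      ring

end Knead

namespace Knead

lemma nsg_right {g : ℝ → ℝ} {C : Finset ℝ} (h : PM g C) {y x v : ℝ} (hyx : y < x) (hxv : x < v)
    (hC : ∀ c ∈ C, c ∉ Ioo y v) (σ : ℤˣ) : sg g (x, σ) = sg g (y, 1) := by
  have h1 := sg_spec h (hyx.trans hxv) hC
  have h2 := sg_spec h hxv (fun c hc hI => hC c hc ⟨hyx.trans hI.1, hI.2⟩)
  have h3 := sg_spec h hyx (fun c hc hI => hC c hc ⟨hI.1, hI.2.trans hxv⟩)
  have := one_ne_neg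
  rcases Int.units_eq_one_or σ with rfl | rfl <;>
  rcases h1 with ⟨a1, a2, _⟩ | ⟨a1, a2, _⟩ <;> rcases h2 with ⟨b1, b2, _⟩ | ⟨b1, b2, _⟩ <;>
  rcases h3 with ⟨c1, c2, _⟩ | ⟨c1, c2, _⟩ <;> simp_all

lemma nsg_left {g : ℝ → ℝ} {C : Finset ℝ} (h : PM g C) {y x v : ℝ} (hyx : x < y) (hxv : v < x)
    (hC : ∀ c ∈ C, c ∉ Ioo v y) (σ : ℤˣ) : sg g (x, σ) = sg g (y, -1) := by
  have h1 := sg_spec h (hxv.trans hyx) hC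
  have h2 := sg_spec h hxv (fun c hc hI => hC c hc ⟨hI.1, hI.2.trans hyx⟩)
  have h3 := sg_spec h hyx (fun c hc hI => hC c hc ⟨hxv.trans hI.1, hI.2⟩)
  have := one_ne_neg
  rcases Int.units_eq_one_or σ with rfl | rfl <;>
  rcases h1 with ⟨a1, a2, _⟩ | ⟨a1, a2, _⟩ <;> rcases h2 with ⟨b1, b2, _⟩ | ⟨b1, b2, _⟩ <;>
  rcases h3 with ⟨c1, c2, _⟩ | ⟨c1, c2, _⟩ <;> simp_all

/-- the germ `X` is close to the point `y` -/
def Near (C : Finset ℝ) (y : ℝ) (x : ℝ) : Prop :=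
  ∃ η > 0, |x - y| < η ∧ ∀ c ∈ C, |c - y| < η → c = y

open Classical in
/-- side of `y` on which the germ `X` lies -/
noncomputable def side (y : ℝ) (X : ℝ × ℤˣ) : ℤˣ :=
  if y < X.1 then 1 else if X.1 < y then -1 else X.2

lemma shadow {g : ℝ → ℝ} {C : Finset ℝ} (h : PM g C) {y : ℝ} {X : ℝ × ℤˣ} (hn : Near C y X.1) :
    sg g X = sg g (y, side y X) ∧ (∀ c ∈ C, Hc c X = Hc c (y, side y X)) ∧
      F g (y, side y X) = (g y, side (g y) (F g X)) := by
  obtain ⟨x, σ⟩ := X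
  obtain ⟨η, hη, hx, hc⟩ := hn
  simp only at hx
  rw [abs_lt] at hx
  rcases lt_trichotomy y x with hyx | rfl | hyx
  · have hs : side y (x, σ) = 1 := by simp [side, hyx]
    have hC : ∀ c ∈ C, c ∉ Ioo y (y + η) := by
      rintro c hcC ⟨h1, h2⟩
      have := hc c hcC (by rw [abs_lt]; constructor <;> linarith)
      linarith
    have hxv : x < y + η := by linarith
    rw [hs]
    have hsg := nsg_right h hyx hxv hC σ
    refine ⟨hsg, ?_, ?_⟩
    · intro c hcC
      have : (c < x ∨ c = x ∧ σ = 1) ↔ (c < y ∨ c = y) := by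
        constructor
        · intro h1
          have h2 : c ≤ x := by rcases h1 with h1 | h1; exacts [h1.le, h1.1.le]
          rw [← le_iff_lt_or_eq]
          by_contra h3
          exact hC c hcC ⟨not_le.1 h3, lt_of_le_of_lt h2 hxv⟩
        · intro h1
          rw [← le_iff_lt_or_eq] at h1
          exact Or.inl (lt_of_le_of_lt h1 hyx)
      simp [Hc, this]
    · have hyI : y ∈ Icc y (y+η) := ⟨le_rfl, by linarith⟩
      have hxI : x ∈ Icc y (y+η) := ⟨hyx.le, by linarith⟩
      rcases sg_spec h (by linarith : y < y + η) hC with ⟨s1, _, hm⟩ | ⟨s1, _, hm⟩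
      · have := hm hyI hxI hyx
        simp [F, side, s1, this]
      · have := hm hyI hxI hyx
        simp [F, side, s1, this, this.le]
  · have hs : side y (y, σ) = σ := by simp [side]
    rw [hs]
    refine ⟨rfl, fun _ _ => rfl, ?_⟩
    simp [F, side]
  · have hs : side y (x, σ) = -1 := by simp [side, hyx, hyx.le]
    have hC : ∀ c ∈ C, c ∉ Ioo (y - η) y := by
      rintro c hcC ⟨h1, h2⟩
      have := hc c hcC (by rw [abs_lt]; constructor <;> linarith)
      linarith
    have hxv : y - η < x := by linarith
    rw [hs]
    have hsg := nsg_left h hyx hxv hC σ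
    refine ⟨hsg, ?_, ?_⟩
    · intro c hcC
      have : (c < x ∨ c = x ∧ σ = 1) ↔ (c < y) := by
        constructor
        · intro h1
          have h2 : c ≤ x := by rcases h1 with h1 | h1; exacts [h1.le, h1.1.le]
          exact lt_of_le_of_lt h2 hyx
        · intro h1
          left
          by_contra h3
          exact hC c hcC ⟨lt_of_lt_of_le hxv (not_lt.1 h3), h1⟩
      simp [Hc, this, one_ne_neg.symm]
    · have hyI : y ∈ Icc (y-η) y := ⟨by linarith, le_rfl⟩
      have hxI : x ∈ Icc (y-η) y := ⟨by linarith, hyx.le⟩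
      rcases sg_spec h (by linarith : y - η < y) hC with ⟨_, s1, hm⟩ | ⟨_, s1, hm⟩
      · have := hm hxI hyI hyx
        simp [F, side, s1, this, this.le]
      · have := hm hxI hyI hyx
        simp [F, side, s1, this]

lemma near_eventually (C : Finset ℝ) (y : ℝ) : ∀ᶠ x in 𝓝 y, Near C y x := by
  obtain ⟨δ, hδ, hsep⟩ := sep (insert y (C : Set ℝ)) (C.finite_toSet.insert y)
  filter_upwards [Metric.ball_mem_nhds y hδ] with x hx
  refine ⟨δ, hδ, hx, fun c hc hcy => ?_⟩
  exact hsep c (Or.inr hc) y (Or.inl rfl) (by linarith)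

lemma F_iter_fst (g : ℝ → ℝ) (X : ℝ × ℤˣ) (n : ℕ) : ((F g)^[n] X).1 = g^[n] X.1 := by
  induction n generalizing X with
  | zero => rfl
  | succ n ih => rw [Function.iterate_succ_apply, ih, Function.iterate_succ_apply]; rfl

lemma units_cube (φ : ℤˣ → ℤˣ) (t : ℤˣ) : φ (φ (φ t)) = φ t := by
  rcases Int.units_eq_one_or t with rfl | rfl <;>
  rcases Int.units_eq_one_or (φ 1) with h1 | h1 <;>
  rcases Int.units_eq_one_or (φ (-1)) with h2 | h2 <;> simp [h1, h2]

lemma germ_periodic {g : ℝ → ℝ} {C : Finset ℝ} (h : PM g C) (X : ℝ × ℤˣ) (m : ℕ) (hm : 1 ≤ m)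
    (p : ℝ) (hp : g^[m] p = p) (ht : Tendsto (fun n : ℕ => g^[m * n] X.1) atTop (𝓝 p)) :
    ∃ N, ∀ n ≥ N, sg g ((F g)^[n + 2 * m] X) = sg g ((F g)^[n] X) ∧
      ∀ c ∈ C, Hc c ((F g)^[n + 2 * m] X) = Hc c ((F g)^[n] X) := by
  have hpm : ∀ n : ℕ, g^[m * n] p = p := fun n => by
    rw [Function.iterate_mul]; exact Function.iterate_fixed hp n
  have hev : ∀ᶠ k : ℕ in atTop, Near C (g^[k] p) (g^[k] X.1) := by
    refine Filter.Eventually.atTop_of_arithmetic (n := m) (by omega) fun r _ => ?_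
    have h1 : Tendsto (fun n : ℕ => g^[r] (g^[m * n] X.1)) atTop (𝓝 (g^[r] p)) :=
      ((h.1.iterate r).tendsto p).comp ht
    filter_upwards [h1.eventually (near_eventually C (g^[r] p))] with n hn
    have e1 : g^[m * n + r] p = g^[r] p := by
      rw [add_comm, Function.iterate_add_apply, hpm]
    have e2 : g^[m * n + r] X.1 = g^[r] (g^[m * n] X.1) := by
      rw [add_comm, Function.iterate_add_apply]
    rw [e1, e2]; exact hn
  obtain ⟨N, hN⟩ := eventually_atTop.1 hev
  set P : ℕ → ℝ × ℤˣ := fun k => (g^[k] p, side (g^[k] p) ((F g)^[k] X)) with hP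
  have hsh : ∀ k ≥ N, sg g ((F g)^[k] X) = sg g (P k) ∧
      (∀ c ∈ C, Hc c ((F g)^[k] X) = Hc c (P k)) ∧ F g (P k) = P (k+1) := by
    intro k hk
    have := shadow h (y := g^[k] p) (X := (F g)^[k] X) (by rw [F_iter_fst]; exact hN k hk)
    refine ⟨this.1, this.2.1, ?_⟩
    rw [hP]
    simp only
    rw [this.2.2, Function.iterate_succ_apply', Function.iterate_succ_apply']
  have hit : ∀ k ≥ N, ∀ j, (F g)^[j] (P k) = P (k + j) := by
    intro k hk j
    induction j with
    | zero => rfl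
    | succ j ih => rw [Function.iterate_succ_apply', ih, (hsh (k+j) (by omega)).2.2]; rfl
  have hper : ∀ k, g^[k + m] p = g^[k] p := fun k => by
    rw [Function.iterate_add_apply, hp]
  have hPper : ∀ k ≥ N + m, P (k + 2 * m) = P k := by
    intro k hk
    obtain ⟨j, rfl⟩ : ∃ j, k = j + m := ⟨k - m, by omega⟩
    have hj : j ≥ N := by omega
    set y := g^[j] p with hy
    set φ : ℤˣ → ℤˣ := fun t => ((F g)^[m] (y, t)).2 with hφ
    have hF : ∀ t, (F g)^[m] (y, t) = (y, φ t) := by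
      intro t
      apply Prod.ext
      · rw [F_iter_fst]
        simp only
        rw [hy, ← Function.iterate_add_apply, add_comm, hper]
      · rfl
    have e1 : P (j + m) = (F g)^[m] (P j) := (hit j hj m).symm
    have e3 : P (j + m + 2 * m) = (F g)^[m] ((F g)^[m] ((F g)^[m] (P j))) := by
      rw [hit j hj, hit _ (by omega), hit _ (by omega)]; congr 1; ring
    have e0 : P j = (y, (P j).2) := rfl
    rw [e1, e3, e0, hF, hF, hF, units_cube φ]
  refine ⟨N + m, fun n hn => ?_⟩
  have a1 := hsh n (by omega)
  have a2 := hsh (n + 2 * m) (by omega)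
  have a3 := hPper n hn
  refine ⟨by rw [a1.1, a2.1, a3], fun c hc => by rw [a1.2.1 c hc, a2.2.1 c hc, a3]⟩

/-- eventually periodic with period `q` -/
def EvPer (s : ℕ → ℤ) (q : ℕ) : Prop := ∃ N, ∀ n ≥ N, s (n + q) = s n

lemma EvPer.mul {s : ℕ → ℤ} {q : ℕ} (h : EvPer s q) (k : ℕ) : EvPer s (q * k) := by
  obtain ⟨N, hN⟩ := h
  refine ⟨N, fun n hn => ?_⟩
  induction k with
  | zero => rfl
  | succ k ih => rw [Nat.mul_succ, ← add_assoc, hN _ (by omega), ih]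

lemma EvPer.dvd {s : ℕ → ℤ} {q r : ℕ} (h : EvPer s q) (hd : q ∣ r) : EvPer s r := by
  obtain ⟨k, rfl⟩ := hd; exact h.mul k

lemma K_eq (g : ℝ → ℝ) (c : ℝ) (n : ℕ) (X : ℝ × ℤˣ) :
    K g c n X = ((∏ k ∈ Finset.range n, sg g ((F g)^[k] X) : ℤˣ) : ℤ) * Hc c ((F g)^[n] X) := by
  induction n generalizing X with
  | zero => simp [K]
  | succ n ih =>
    rw [K, ih, Finset.prod_range_succ']
    simp only [Function.iterate_succ_apply, Function.iterate_zero, id]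
    push_cast
    ring

lemma K_bdd (g : ℝ → ℝ) (c : ℝ) (n : ℕ) (X : ℝ × ℤˣ) : |K g c n X| ≤ 1 := by
  rw [K_eq, abs_mul, Int.abs_eq_natAbs, Int.units_natAbs]
  unfold Hc
  split_ifs <;> simp

lemma K_periodic {g : ℝ → ℝ} {C : Finset ℝ} (h : PM g C) (X : ℝ × ℤˣ) (m : ℕ) (hm : 1 ≤ m)
    (p : ℝ) (hp : g^[m] p = p) (ht : Tendsto (fun n : ℕ => g^[m * n] X.1) atTop (𝓝 p)) :
    ∀ c ∈ C, EvPer (fun n => K g c n X) (4 * m) := by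
  intro c hc
  obtain ⟨N, hN⟩ := germ_periodic h X m hm p hp ht
  refine ⟨N, fun n hn => ?_⟩
  simp only
  rw [K_eq, K_eq]
  have e4 : n + 4 * m = (n + 2 * m) + 2 * m := by ring
  congr 1
  · congr 1
    rw [e4, Finset.prod_range_add, Finset.prod_range_add, mul_assoc]
    have : ∏ x ∈ Finset.range (2 * m), sg g ((F g)^[n + 2 * m + x] X) =
        ∏ x ∈ Finset.range (2 * m), sg g ((F g)^[n + x] X) := by
      refine Finset.prod_congr rfl fun x _ => ?_
      rw [add_right_comm]; exact (hN (n + x) (by omega)).1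
    rw [this, Int.units_mul_self, mul_one]
  · rw [e4, (hN (n + 2*m) (by omega)).2 c hc, (hN n hn).2 c hc]

lemma nu_periodic {g : ℝ → ℝ} {C : Finset ℝ} (h : PM g C)
    (hattr : ∀ w ∈ C, ∃ m : ℕ, 1 ≤ m ∧ ∃ p, g^[m] p = p ∧
      Tendsto (fun n : ℕ => g^[m * n] w) atTop (𝓝 p)) :
    ∃ q : ℕ, 1 ≤ q ∧ ∀ w ∈ C, ∀ c ∈ C, EvPer (nu g c w) q := by
  choose! m hm1 p hp ht using hattr
  refine ⟨∏ w ∈ C, (4 * m w), Finset.prod_pos fun w hw => Nat.mul_pos (by norm_num) (hm1 w hw), ?_⟩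
  intro w hw c hc
  have hd : 4 * m w ∣ ∏ w ∈ C, (4 * m w) := Finset.dvd_prod_of_mem _ hw
  obtain ⟨N1, h1⟩ := (K_periodic h (w, 1) (m w) (hm1 w hw) (p w) (hp w hw) (ht w hw) c hc).dvd hd
  obtain ⟨N2, h2⟩ := (K_periodic h (w, -1) (m w) (hm1 w hw) (p w) (hp w hw) (ht w hw) c hc).dvd hd
  refine ⟨max N1 N2, fun n hn => ?_⟩
  have a1 := h1 n (le_trans (le_max_left _ _) hn)
  have a2 := h2 n (le_trans (le_max_right _ _) hn)
  simp only at a1 a2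
  simp only [nu, a1, a2]

end Knead

namespace Knead

/-- power series with bounded coefficients -/
def Bd (φ : PowerSeries ℤ) : Prop := ∃ B : ℤ, ∀ n, |PowerSeries.coeff n φ| ≤ B

lemma Bd.add {φ ψ : PowerSeries ℤ} (h1 : Bd φ) (h2 : Bd ψ) : Bd (φ + ψ) := by
  obtain ⟨A, hA⟩ := h1
  obtain ⟨B, hB⟩ := h2
  exact ⟨A + B, fun n => by rw [map_add]; exact (abs_add_le _ _).trans (add_le_add (hA n) (hB n))⟩

lemma Bd.zero : Bd 0 := ⟨0, fun n => by simp⟩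

lemma Bd.sum {ι : Type*} (s : Finset ι) (φ : ι → PowerSeries ℤ) (h : ∀ i ∈ s, Bd (φ i)) :
    Bd (∑ i ∈ s, φ i) := by
  classical
  induction s using Finset.induction_on with
  | empty => simpa using Bd.zero
  | insert i s hi ih =>
    rw [Finset.sum_insert hi]
    exact (h i (by simp)).add (ih fun j hj => h j (by simp [hj]))

lemma Bd.mul_monomial {φ : PowerSeries ℤ} (h : Bd φ) (n : ℕ) (a : ℤ) :
    Bd (φ * ((Polynomial.monomial n a : Polynomial ℤ) : PowerSeries ℤ)) := by
  obtain ⟨A, hA⟩ := h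
  have hA0 : 0 ≤ A := (abs_nonneg _).trans (hA 0)
  refine ⟨A * |a|, fun k => ?_⟩
  have e : ((Polynomial.monomial n a : Polynomial ℤ) : PowerSeries ℤ) =
      PowerSeries.C a * PowerSeries.X ^ n := by
    rw [← Polynomial.C_mul_X_pow_eq_monomial, Polynomial.coe_mul, Polynomial.coe_C,
      Polynomial.coe_pow, Polynomial.coe_X]
  rw [e, mul_left_comm, PowerSeries.coeff_C_mul, PowerSeries.coeff_mul_X_pow', abs_mul, mul_comm]
  split_ifs
  · exact mul_le_mul_of_nonneg_right (hA _) (abs_nonneg _)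
  · simp; positivity

lemma Bd.mul_poly {φ : PowerSeries ℤ} (h : Bd φ) (P : Polynomial ℤ) :
    Bd (φ * (P : PowerSeries ℤ)) := by
  induction P using Polynomial.induction_on' with
  | add p q hp hq => rw [Polynomial.coe_add, mul_add]; exact hp.add hq
  | monomial n a => exact h.mul_monomial n a

lemma evper_poly {s : ℕ → ℤ} {q : ℕ} (hq : 1 ≤ q) (h : EvPer s q) :
    ∃ P : Polynomial ℤ, (PowerSeries.mk s) * (1 - PowerSeries.X ^ q) = (P : PowerSeries ℤ) := by
  obtain ⟨N, hN⟩ := h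
  refine ⟨PowerSeries.trunc (N + q) ((PowerSeries.mk s) * (1 - PowerSeries.X ^ q)), ?_⟩
  ext n
  rw [Polynomial.coeff_coe, PowerSeries.coeff_trunc]
  split_ifs with hn
  · rfl
  · rw [mul_sub, mul_one, map_sub, PowerSeries.coeff_mul_X_pow', if_pos (by omega),
      PowerSeries.coeff_mk, PowerSeries.coeff_mk]
    have := hN (n - q) (by omega)
    rw [Nat.sub_add_cancel (by omega)] at this
    rw [this, sub_self]

lemma algebraic_structure {ι : Type*} [Fintype ι] [DecidableEq ι] (ν : ι → ι → ℕ → ℤ)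
    (Γ : ι → ℕ → ℤ) (β : ι → ℕ → ℤ) (hβ : ∀ c n, |β c n| ≤ 2) (q : ℕ) (hq : 1 ≤ q)
    (hper : ∀ w c, EvPer (ν w c) q) (h0 : ∀ w c, ν w c 0 = if w = c then 1 else 0)
    (hid : ∀ c n, β c n = ∑ k ∈ Finset.range (n+1), ∑ w, Γ w k * ν w c (n - k)) :
    ∃ D : Polynomial ℤ, D ≠ 0 ∧ ∀ w, Bd (PowerSeries.mk (Γ w) * (D : PowerSeries ℤ)) := by
  choose P hP using fun w c => evper_poly hq (hper w c)
  set M : Matrix ι ι (Polynomial ℤ) := Matrix.of P with hM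
  set MM : Matrix ι ι (PowerSeries ℤ) := M.map (Polynomial.coeToPowerSeries.ringHom) with hMM
  have hb : ∀ c, Bd (PowerSeries.mk (β c)) := fun c => ⟨2, fun n => by simpa using hβ c n⟩
  have hrow : ∀ c, PowerSeries.mk (β c) = ∑ w, PowerSeries.mk (Γ w) * PowerSeries.mk (ν w c) := by
    intro c
    ext n
    rw [PowerSeries.coeff_mk, hid, map_sum, Finset.sum_comm]
    refine Finset.sum_congr rfl fun w _ => ?_
    rw [PowerSeries.coeff_mul, Finset.Nat.sum_antidiagonal_eq_sum_range_succ_mk]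
    simp
  have hvec : Matrix.vecMul (fun w => PowerSeries.mk (Γ w)) MM =
      fun c => PowerSeries.mk (β c) * (1 - PowerSeries.X ^ q) := by
    funext c
    rw [hrow, Finset.sum_mul]
    simp only [Matrix.vecMul, dotProduct]
    refine Finset.sum_congr rfl fun w _ => ?_
    rw [mul_assoc, hP]
    rfl
  have hdet : ((M.det : Polynomial ℤ) : PowerSeries ℤ) = MM.det := by
    rw [hMM, ← RingHom.mapMatrix_apply, ← RingHom.map_det]; rfl
  have hadj : MM.adjugate = M.adjugate.map (Polynomial.coeToPowerSeries.ringHom) := by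
    rw [hMM, ← RingHom.mapMatrix_apply, ← RingHom.map_adjugate]; rfl
  refine ⟨M.det, ?_, ?_⟩
  · intro hz
    have h1 : (M.map (Polynomial.constantCoeff)).det = 0 := by
      rw [← RingHom.mapMatrix_apply, ← RingHom.map_det, hz, map_zero]
    have h2 : M.map (Polynomial.constantCoeff) = 1 := by
      ext w c
      have h3 := congrArg (PowerSeries.coeff 0) (hP w c)
      rw [Polynomial.coeff_coe, mul_sub, mul_one, map_sub, PowerSeries.coeff_mul_X_pow',
        if_neg (by omega), PowerSeries.coeff_mk, h0] at h3
      simp only [Matrix.map_apply, hM, Matrix.of_apply, Polynomial.constantCoeff_apply, ← h3,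
        Matrix.one_apply, sub_zero]
    rw [h2, Matrix.det_one] at h1
    exact one_ne_zero h1
  · intro w
    have h4 : Matrix.vecMul (Matrix.vecMul (fun w => PowerSeries.mk (Γ w)) MM) MM.adjugate =
        fun w => PowerSeries.mk (Γ w) * MM.det := by
      rw [Matrix.vecMul_vecMul, Matrix.mul_adjugate]
      funext c
      simp [Matrix.vecMul_smul, mul_comm]
    have h5 := congrFun h4 w
    beta_reduce at h5
    rw [hdet, ← h5, hvec, hadj]
    simp only [Matrix.vecMul, dotProduct]
    refine Bd.sum _ _ fun c _ => ?_
    have e : PowerSeries.mk (β c) * (1 - PowerSeries.X ^ q) =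
        PowerSeries.mk (β c) * ((1 - Polynomial.X ^ q : Polynomial ℤ) : PowerSeries ℤ) := by
      simp
    rw [e]
    exact ((hb c).mul_poly _).mul_poly _

lemma algebraic_of_growth (γ : ℕ → ℕ) (D : Polynomial ℤ) (hD : D ≠ 0)
    (hB : Bd (PowerSeries.mk (fun n => (γ n : ℤ)) * (D : PowerSeries ℤ))) (s : ℝ) (hs : 0 < s)
    (A : ℝ) (hA : 0 ≤ A)
    (hlow : ∀ n : ℕ, Real.exp (s * n) ≤ A + ∑ k ∈ Finset.range n, (γ k : ℝ))
    (hup : ∀ r > s, ∀ᶠ n : ℕ in atTop, (γ n : ℝ) ≤ Real.exp (r * n)) :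
    IsAlgebraic ℚ (Real.exp s) := by
  set t0 := Real.exp (-s) with ht0
  have ht0p : 0 < t0 := Real.exp_pos _
  have ht01 : t0 < 1 := by rw [ht0]; simpa using hs
  obtain ⟨B, hB⟩ := hB
  have hB0 : (0:ℝ) ≤ B := by exact_mod_cast (abs_nonneg _).trans (hB 0)
  -- summability
  have hsum : ∀ t, 0 < t → t < t0 → Summable (fun n => (γ n : ℝ) * t ^ n) := by
    intro t ht htt
    have hlt : Real.log t < -s := by
      rw [Real.log_lt_iff_lt_exp ht]; exact htt
    set r := (s - Real.log t) / 2 with hr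
    have hg : Summable (fun n : ℕ => (Real.exp (r + Real.log t)) ^ n) :=
      summable_geometric_of_lt_one (Real.exp_pos _).le (by
        rw [Real.exp_lt_one_iff]; rw [hr]; linarith)
    refine summable_of_isBigO_nat hg (Asymptotics.IsBigO.of_bound 1 ?_)
    filter_upwards [hup r (by rw [hr]; linarith)] with n hn
    rw [one_mul, Real.norm_of_nonneg (by positivity), Real.norm_of_nonneg (by positivity),
      Real.exp_add, Real.exp_log ht, mul_pow, ← Real.exp_nat_mul, mul_comm (n:ℝ)]
    gcongr
  -- evaluation identity
  have heval : ∀ t, 0 < t → t < t0 →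
      |(D.map (Int.castRingHom ℝ)).eval t| * ∑' n, (γ n : ℝ) * t ^ n ≤ B / (1 - t0) := by
    intro t ht htt
    set d : ℕ → ℝ := fun n => (D.coeff n : ℝ) * t ^ n with hd
    have hdz : ∀ n ∉ Finset.range (D.natDegree + 1), d n = 0 := by
      intro n hn
      rw [Finset.mem_range, not_lt] at hn
      simp only [hd]
      rw [Polynomial.coeff_eq_zero_of_natDegree_lt (by omega)]; simp
    have hds : Summable d := summable_of_ne_finset_zero hdz
    have hdn : Summable (fun n => ‖d n‖) := hds.norm
    have hde : ∑' n, d n = (D.map (Int.castRingHom ℝ)).eval t := by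
      rw [tsum_eq_sum hdz, Polynomial.eval_map, Polynomial.eval₂_eq_sum_range]; rfl
    have hgs := hsum t ht htt
    have hprod := tsum_mul_tsum_eq_tsum_sum_antidiagonal_of_summable_norm hgs.norm hdn
    have hcoef : ∀ n : ℕ, ∑ kl ∈ Finset.HasAntidiagonal.antidiagonal n, ((γ kl.1 : ℝ) * t ^ kl.1) * d kl.2 =
        ((PowerSeries.coeff n (PowerSeries.mk (fun n => (γ n : ℤ)) * (D : PowerSeries ℤ)) : ℤ) : ℝ)
          * t ^ n := by
      intro n
      rw [PowerSeries.coeff_mul, Int.cast_sum, Finset.sum_mul]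
      refine Finset.sum_congr rfl fun kl hkl => ?_
      rw [Finset.HasAntidiagonal.mem_antidiagonal] at hkl
      rw [← hkl, pow_add]
      simp only [hd, PowerSeries.coeff_mk, Polynomial.coeff_coe]
      push_cast; ring
    have h1t : t < 1 := htt.trans ht01
    have hgeo := hasSum_geometric_of_lt_one ht.le h1t
    have hbd : ∀ n : ℕ, ‖∑ kl ∈ Finset.HasAntidiagonal.antidiagonal n, ((γ kl.1 : ℝ) * t ^ kl.1) * d kl.2‖ ≤
        (B:ℝ) * t ^ n := by
      intro n
      rw [hcoef, norm_mul, norm_pow, Real.norm_of_nonneg ht.le, Real.norm_eq_abs]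
      gcongr
      exact_mod_cast hB n
    have hle := tsum_of_norm_bounded (hgeo.mul_left (B:ℝ)) hbd
    rw [← hprod, hde, norm_mul, Real.norm_of_nonneg (tsum_nonneg fun n => by positivity),
      Real.norm_eq_abs, mul_comm] at hle
    refine hle.trans ?_
    rw [div_eq_mul_inv]
    gcongr
  -- D vanishes at t0
  have hroot : (D.map (Int.castRingHom ℝ)).eval t0 = 0 := by
    by_contra hne
    set d0 := |(D.map (Int.castRingHom ℝ)).eval t0| with hd0
    have hd0p : 0 < d0 := abs_pos.2 hne
    have hcont : Continuous fun t => |(D.map (Int.castRingHom ℝ)).eval t| :=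
      (Polynomial.continuous _).abs
    have hnear : ∀ᶠ t in 𝓝[<] t0, d0 / 2 < |(D.map (Int.castRingHom ℝ)).eval t| :=
      (hcont.tendsto t0).mono_left nhdsWithin_le_nhds |>.eventually (lt_mem_nhds (half_lt_self hd0p))
    have hpos : ∀ᶠ t in 𝓝[<] t0, 0 < t :=
      nhdsWithin_le_nhds (lt_mem_nhds ht0p)
    set Bo := B / (1 - t0) / (d0 / 2) with hBo
    have hpart : ∀ N : ℕ, ∑ n ∈ Finset.range N, (γ n : ℝ) * t0 ^ n ≤ Bo := by
      intro N
      have hc : Tendsto (fun t => ∑ n ∈ Finset.range N, (γ n : ℝ) * t ^ n) (𝓝[<] t0)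
          (𝓝 (∑ n ∈ Finset.range N, (γ n : ℝ) * t0 ^ n)) := by
        apply Tendsto.mono_left _ nhdsWithin_le_nhds
        exact Continuous.tendsto (by fun_prop) t0
      refine le_of_tendsto hc ?_
      filter_upwards [hnear, hpos, self_mem_nhdsWithin] with t h1 h2 h3
      have h4 := heval t h2 h3
      have h5 := (hsum t h2 h3).sum_le_tsum (Finset.range N) (fun n _ => by positivity)
      refine h5.trans ?_
      rw [hBo, le_div_iff₀ (half_pos hd0p), mul_comm]
      refine le_trans ?_ h4
      exact mul_le_mul_of_nonneg_right h1.le (tsum_nonneg fun n => by positivity)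
    -- contradiction
    have h1t : 0 < 1 - t0 := by linarith
    have key : ∀ N : ℕ, (N : ℝ) ≤ A / (1 - t0) + Bo / (1 - t0) := by
      intro N
      have e1 : ∀ n : ℕ, 1 ≤ A * t0 ^ n + ∑ k ∈ Finset.range n, (γ k : ℝ) * t0 ^ n := by
        intro n
        have := mul_le_mul_of_nonneg_right (hlow n) (pow_pos ht0p n).le
        rw [← Finset.sum_mul, ← add_mul]
        refine le_trans (le_of_eq ?_) this
        rw [ht0, ← Real.exp_nat_mul, ← Real.exp_add]
        simp [mul_comm]
      have e2 : ∀ (M : ℕ), ∑ n ∈ Finset.range M, ∑ k ∈ Finset.range n, (γ k : ℝ) * t0 ^ n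
          ≤ ((∑ k ∈ Finset.range M, (γ k : ℝ) * t0 ^ k)
            - ∑ k ∈ Finset.range M, (γ k : ℝ) * t0 ^ M) / (1 - t0) := by
        intro M
        induction M with
        | zero => simp
        | succ M ih =>
          rw [Finset.sum_range_succ]
          refine (add_le_add_left ih _).trans ?_
          rw [Finset.sum_range_succ (fun k => (γ k : ℝ) * t0 ^ k),
            Finset.sum_range_succ (fun k => (γ k : ℝ) * t0 ^ (M+1)),
            ← Finset.sum_mul, ← Finset.sum_mul, div_add' _ _ _ h1t.ne',
            div_le_div_iff_of_pos_right h1t]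
          have : 0 ≤ (γ M : ℝ) * t0 ^ M * (1 - t0) := by positivity
          rw [pow_succ]
          nlinarith
      have e3 : ∑ n ∈ Finset.range N, t0 ^ n ≤ 1 / (1 - t0) := by
        have := (hasSum_geometric_of_lt_one ht0p.le ht01)
        rw [one_div, ← this.tsum_eq]
        exact this.summable.sum_le_tsum _ (fun n _ => by positivity)
      have e4 : ∑ n ∈ Finset.range N, ∑ k ∈ Finset.range n, (γ k : ℝ) * t0 ^ n ≤ Bo / (1 - t0) := by
        refine (e2 N).trans ?_
        gcongr
        have : 0 ≤ ∑ k ∈ Finset.range N, (γ k : ℝ) * t0 ^ N :=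
          Finset.sum_nonneg fun _ _ => by positivity
        linarith [hpart N]
      calc (N:ℝ) = ∑ n ∈ Finset.range N, (1:ℝ) := by simp
        _ ≤ ∑ n ∈ Finset.range N, (A * t0 ^ n + ∑ k ∈ Finset.range n, (γ k : ℝ) * t0 ^ n) :=
          Finset.sum_le_sum fun n _ => e1 n
        _ = A * ∑ n ∈ Finset.range N, t0 ^ n +
            ∑ n ∈ Finset.range N, ∑ k ∈ Finset.range n, (γ k : ℝ) * t0 ^ n := by
          rw [Finset.sum_add_distrib, Finset.mul_sum]
        _ ≤ A * (1 / (1 - t0)) + Bo / (1 - t0) := by gcongr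
        _ = _ := by ring
    obtain ⟨N, hN⟩ := exists_nat_gt (A / (1 - t0) + Bo / (1 - t0))
    linarith [key N]
  have halg : IsAlgebraic ℚ t0 := by
    have : IsAlgebraic ℤ t0 := by
      refine ⟨D, hD, ?_⟩
      rw [Polynomial.aeval_def, ← Polynomial.eval_map]
      exact hroot
    exact this.extendScalars (Int.cast_injective)
  have : Real.exp s = t0⁻¹ := by rw [ht0, ← Real.exp_neg, neg_neg]
  rw [this]
  exact halg.inv

end Knead

namespace Knead

lemma Q_le {g : ℝ → ℝ} {C : Finset ℝ} (h : PM g C) (a b : ℝ) (n : ℕ) :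
    (Q g C a b n).ncard ≤ 2 + ∑ k ∈ Finset.range n, ∑ w ∈ C, (Gs g C w k a b).ncard := by
  classical
  have hsub : Q g C a b n ⊆ ({a, b} : Set ℝ) ∪
      ((Finset.range n).biUnion fun k => C.attach.biUnion fun w =>
        (Gs_finite h w.2 k a b).toFinset : Finset ℝ) := by
    rintro z ⟨hz, j, hj, hc⟩
    have hex : ∃ j, g^[j] z ∈ C := ⟨j, hc⟩
    by_cases hza : z = a
    · left; simp [hza]
    by_cases hzb : z = b
    · left; simp [hzb]
    right
    rw [Finset.mem_coe, Finset.mem_biUnion]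
    refine ⟨Nat.find hex, ?_, ?_⟩
    · rw [Finset.mem_range]
      exact lt_of_le_of_lt (Nat.find_min' hex hc) hj
    · rw [Finset.mem_biUnion]
      refine ⟨⟨_, Nat.find_spec hex⟩, Finset.mem_attach _ _, ?_⟩
      rw [Set.Finite.mem_toFinset]
      exact ⟨⟨lt_of_le_of_ne hz.1 (Ne.symm hza), lt_of_le_of_ne hz.2 hzb⟩, rfl,
        fun k hk => Nat.find_min hex hk⟩
  refine (Set.ncard_le_ncard hsub ((Set.toFinite _).union (Finset.finite_toSet _))).trans ?_
  refine (Set.ncard_union_le _ _).trans (add_le_add ?_ ?_)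
  · exact (Set.ncard_insert_le _ _).trans (by simp)
  · rw [Set.ncard_coe_finset]
    refine Finset.card_biUnion_le.trans (Finset.sum_le_sum fun k _ => ?_)
    refine Finset.card_biUnion_le.trans ?_
    rw [← Finset.sum_attach C]
    refine Finset.sum_le_sum fun w _ => ?_
    rw [Set.ncard_eq_toFinset_card _ (Gs_finite h w.2 k a b)]

lemma Gs_le {g : ℝ → ℝ} {C : Finset ℝ} (h : PM g C) (a b : ℝ) (n : ℕ) :
    ((∑ w ∈ C, (Gs g C w n a b).ncard : ℕ) : ℝ) ≤ C.card * L g C a b (n + 1) := by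
  have : ∑ w ∈ C, (Gs g C w n a b).ncard ≤ ∑ w ∈ C, (Q g C a b (n+1)).ncard := by
    refine Finset.sum_le_sum fun w hw => Set.ncard_le_ncard ?_ (Q_finite h a b (n+1))
    exact fun _ hz => ⟨⟨hz.1.1.le, hz.1.2.le⟩, n, Nat.lt_succ_self n, by rw [hz.2.1]; exact hw⟩
  rw [Finset.sum_const, smul_eq_mul] at this
  have h2 : ((∑ w ∈ C, (Gs g C w n a b).ncard : ℕ) : ℝ) ≤ C.card * (Q g C a b (n+1)).ncard := by
    exact_mod_cast this
  refine h2.trans ?_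
  unfold L
  gcongr
  linarith

lemma assembly {g : ℝ → ℝ} {C : Finset ℝ} (h : PM g C) {a b : ℝ} (hab : a < b)
    (hattr : ∀ w ∈ C, ∃ m, 1 ≤ m ∧ ∃ p, g^[m] p = p ∧
      Tendsto (fun n => g^[m*n] w) atTop (𝓝 p))
    (s : ℝ) (hs0 : 0 ≤ s) (hs : ∀ n : ℕ, Real.exp (s * n) ≤ L g C a b n)
    (hs' : ∀ r > s, ∀ᶠ n : ℕ in atTop, L g C a b n ≤ Real.exp (r * n)) :
    IsAlgebraic ℚ (Real.exp s) := by
  classical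
  rcases hs0.eq_or_lt with rfl | hspos
  · rw [Real.exp_zero]; exact isAlgebraic_one
  obtain ⟨q, hq, hper⟩ := nu_periodic h hattr
  obtain ⟨D, hD, hB⟩ := algebraic_structure (ι := C) (fun w c n => nu g c w n)
    (fun w n => ((Gs g C w n a b).ncard : ℤ))
    (fun c n => K g c n (b, -1) - K g c n (a, 1))
    (fun c n => (abs_sub _ _).trans (by
      have h1 := K_bdd g c n (b, -1)
      have h2 := K_bdd g c n (a, 1)
      linarith)) q hq (fun w c => hper w w.2 c c.2)
    (fun w c => by
      have := one_ne_neg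
      simp only [nu, K, Hc]
      by_cases hwc : w = c
      · subst hwc; simp [this.symm]
      · have : (c : ℝ) ≠ w := fun e => hwc (Subtype.ext e.symm)
        simp [hwc, this])
    (fun c n => by
      rw [kneading h c.2 n a b hab, rhs]
      refine Finset.sum_congr rfl fun k _ => ?_
      exact (Finset.sum_coe_sort C (fun w => ((Gs g C w k a b).ncard : ℤ) * nu g c w (n - k))).symm)
  refine algebraic_of_growth (fun n => ∑ w ∈ C, (Gs g C w n a b).ncard) D hD ?_ s hspos 3
    (by norm_num) ?_ ?_
  · have e : (PowerSeries.mk fun n => ((∑ w ∈ C, (Gs g C w n a b).ncard : ℕ) : ℤ)) =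
        ∑ w : C, PowerSeries.mk fun n => ((Gs g C w n a b).ncard : ℤ) := by
      ext n
      rw [map_sum]
      simp only [PowerSeries.coeff_mk]
      rw [Nat.cast_sum]
      exact (Finset.sum_coe_sort C (fun w => ((Gs g C w n a b).ncard : ℤ))).symm
    rw [e, Finset.sum_mul]
    exact Bd.sum _ _ fun w _ => hB w
  · intro n
    refine (hs n).trans ?_
    have h1 : ((Q g C a b n).ncard : ℝ) ≤
        2 + ∑ k ∈ Finset.range n, ((∑ w ∈ C, (Gs g C w k a b).ncard : ℕ) : ℝ) := by
      exact_mod_cast Q_le h a b n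
    unfold L
    linarith
  · intro r hr
    set r' := (s + r) / 2 with hr'
    have h1 := (tendsto_add_atTop_nat 1).eventually (hs' r' (by rw [hr']; linarith))
    have h2 : Tendsto (fun n : ℕ => (r - r') * (n : ℝ)) atTop atTop :=
      tendsto_natCast_atTop_atTop.const_mul_atTop (by rw [hr']; linarith)
    have h3 := (Real.tendsto_exp_atTop.comp h2).eventually_ge_atTop (C.card * Real.exp r')
    filter_upwards [h1, h3] with n h1 h3
    refine (Gs_le h a b n).trans ?_
    have e : Real.exp (r' * ((n + 1 : ℕ) : ℝ)) = Real.exp r' * Real.exp (r' * n) := by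
      rw [← Real.exp_add]; push_cast; ring_nf
    calc (C.card : ℝ) * L g C a b (n+1) ≤ C.card * Real.exp (r' * ((n + 1 : ℕ) : ℝ)) := by gcongr
      _ = (C.card * Real.exp r') * Real.exp (r' * n) := by rw [e]; ring
      _ ≤ Real.exp ((r - r') * n) * Real.exp (r' * n) := by
          gcongr; exact h3
      _ = Real.exp (r * n) := by rw [← Real.exp_add]; ring_nf

end Knead

namespace Knead

/-- affine extension of a map of `[a,b]` to the line -/
noncomputable def ext (f : ℝ → ℝ) (a b e0 e1 : ℝ) (x : ℝ) : ℝ :=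
  f (max a (min b x)) + e0 * min (x - a) 0 + e1 * max (x - b) 0

lemma ext_mono {f : ℝ → ℝ} {a b e0 e1 lo hi u v : ℝ} (hab : a < b) (hlo : a ≤ lo) (hhi : hi ≤ b)
    (hf : StrictMonoOn f (Icc lo hi)) (h0 : lo ≤ u ∨ (lo = a ∧ e0 = 1))
    (h1 : v ≤ hi ∨ (hi = b ∧ e1 = 1)) (hlohi : lo < hi) :
    StrictMonoOn (ext f a b e0 e1) (Icc u v) := by
  intro x hx y hy hxy
  have hA : e0 * min (x - a) 0 ≤ e0 * min (y - a) 0 ∧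
      (y ≤ a → e0 * min (x - a) 0 < e0 * min (y - a) 0) := by
    rcases h0 with h0 | ⟨-, rfl⟩
    · have e1 : 0 ≤ x - a := by linarith [hx.1]
      have e2 : 0 ≤ y - a := by linarith
      rw [min_eq_right e1, min_eq_right e2]
      exact ⟨le_rfl, fun h => by linarith⟩
    · rw [one_mul, one_mul]
      refine ⟨min_le_min_right _ (by linarith), fun h => ?_⟩
      rw [min_eq_left (by linarith), min_eq_left (by linarith)]; linarith
  have hB : e1 * max (x - b) 0 ≤ e1 * max (y - b) 0 ∧
      (b ≤ x → e1 * max (x - b) 0 < e1 * max (y - b) 0) := by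
    rcases h1 with h1 | ⟨-, rfl⟩
    · have e1 : y - b ≤ 0 := by linarith [hy.2]
      have e2 : x - b ≤ 0 := by linarith
      rw [max_eq_right e1, max_eq_right e2]
      exact ⟨le_rfl, fun h => by linarith⟩
    · rw [one_mul, one_mul]
      refine ⟨max_le_max_right _ (by linarith), fun h => ?_⟩
      rw [max_eq_left (by linarith), max_eq_left (by linarith)]; linarith
  have hpr : ∀ z ∈ Icc u v, max a (min b z) ∈ Icc lo hi := by
    intro z hz
    constructor
    · rcases h0 with h0 | ⟨rfl, -⟩
      · exact le_max_of_le_right (le_min (by linarith) (by linarith [hz.1]))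
      · exact le_max_left _ _
    · rcases h1 with h1 | ⟨rfl, -⟩
      · exact max_le (by linarith) ((min_le_right _ _).trans (by linarith [hz.2]))
      · exact max_le hab.le (min_le_left _ _)
  have hle : f (max a (min b x)) ≤ f (max a (min b y)) :=
    hf.monotoneOn (hpr x hx) (hpr y hy) (max_le_max_left _ (min_le_min_left _ hxy.le))
  unfold ext
  by_cases hya : y ≤ a
  · linarith [hA.2 hya, hB.1]
  by_cases hxb : b ≤ x
  · linarith [hB.2 hxb, hA.1]
  have hlt : f (max a (min b x)) < f (max a (min b y)) := by
    refine hf (hpr x hx) (hpr y hy) ?_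
    push Not at hya hxb
    rw [min_eq_right hxb.le, max_lt_iff]
    exact ⟨lt_max_of_lt_right (lt_min hab hya), lt_max_of_lt_right (lt_min hxb hxy)⟩
  linarith [hA.1, hB.1]

lemma ext_anti {f : ℝ → ℝ} {a b e0 e1 lo hi u v : ℝ} (hab : a < b) (hlo : a ≤ lo) (hhi : hi ≤ b)
    (hf : StrictAntiOn f (Icc lo hi)) (h0 : lo ≤ u ∨ (lo = a ∧ e0 = -1))
    (h1 : v ≤ hi ∨ (hi = b ∧ e1 = -1)) (hlohi : lo < hi) :
    StrictAntiOn (ext f a b e0 e1) (Icc u v) := by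
  have := ext_mono (f := fun x => - f x) (e0 := -e0) (e1 := -e1) hab hlo hhi (hf.neg)
    (h0.imp_right fun h => ⟨h.1, by rw [h.2, neg_neg]⟩)
    (h1.imp_right fun h => ⟨h.1, by rw [h.2, neg_neg]⟩) hlohi
  intro x hx y hy hxy
  have := this hx hy hxy
  simp only [ext] at this ⊢
  linarith

lemma ext_eqOn (f : ℝ → ℝ) (a b e0 e1 : ℝ) : EqOn f (ext f a b e0 e1) (Icc a b) := by
  intro x hx
  unfold ext
  rw [min_eq_right hx.2, max_eq_right hx.1, min_eq_right (by linarith [hx.1]),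
    max_eq_right (by linarith [hx.2])]
  simp

lemma ext_cont {f : ℝ → ℝ} {a b : ℝ} (hab : a ≤ b) (hf : ContinuousOn f (Icc a b)) (e0 e1 : ℝ) :
    Continuous (ext f a b e0 e1) := by
  have h : Continuous fun x => f (max a (min b x)) :=
    hf.comp_continuous (by fun_prop) fun x => ⟨le_max_left _ _, max_le hab (min_le_left _ _)⟩
  unfold ext
  exact (h.add (by fun_prop)).add (by fun_prop)

open Classical in
lemma exists_ext {a b : ℝ} (hab : a < b) {f : ℝ → ℝ} (hcont : ContinuousOn f (Icc a b))
    {l : ℕ} (hl : 1 ≤ l) {c : Fin (l + 1) → ℝ}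
    (hmono : StrictMono c) (hc0 : c 0 = a) (hcl : c (Fin.last l) = b)
    (hlaps : ∀ i : Fin l,
      StrictMonoOn f (Icc (c i.castSucc) (c i.succ)) ∨
        StrictAntiOn f (Icc (c i.castSucc) (c i.succ))) :
    ∃ g : ℝ → ℝ, EqOn f g (Icc a b) ∧
      PM g ((Finset.univ.filter fun i : Fin (l+1) => (i:ℕ) ≠ 0 ∧ (i:ℕ) ≠ l).image c) := by
  have he : ∀ i : Fin l, ∃ e : ℝ, (e = 1 ∧ StrictMonoOn f (Icc (c i.castSucc) (c i.succ))) ∨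
      (e = -1 ∧ StrictAntiOn f (Icc (c i.castSucc) (c i.succ))) := by
    intro i
    rcases hlaps i with h | h
    · exact ⟨1, Or.inl ⟨rfl, h⟩⟩
    · exact ⟨-1, Or.inr ⟨rfl, h⟩⟩
  choose e he using he
  have hin : ∀ i, c i ∈ Icc a b := fun i =>
    ⟨by rw [← hc0]; exact hmono.monotone (Fin.zero_le _),
     by rw [← hcl]; exact hmono.monotone (Fin.le_last _)⟩
  refine ⟨ext f a b (e ⟨0, by omega⟩) (e ⟨l - 1, by omega⟩), ext_eqOn f a b _ _,
    ext_cont hab.le hcont _ _, ?_⟩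
  intro u v huv hC
  -- the lap
  have hne : (Finset.univ.filter fun i : Fin l => (i:ℕ) = 0 ∨ c i.castSucc ≤ u).Nonempty :=
    ⟨⟨0, by omega⟩, by simp⟩
  obtain ⟨i, hi, hmax⟩ := Finset.exists_max_image _ (fun i : Fin l => (i:ℕ)) hne
  rw [Finset.mem_filter] at hi
  have h0 : c i.castSucc ≤ u ∨ (c i.castSucc = a ∧ (i:ℕ) = 0) := by
    rcases hi.2 with h | h
    · right
      refine ⟨?_, h⟩
      rw [← hc0]; congr 1; exact Fin.ext h
    · exact Or.inl h
  have h1 : v ≤ c i.succ ∨ (c i.succ = b ∧ (i:ℕ) = l - 1) := by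
    by_cases hil : (i:ℕ) = l - 1
    · right
      refine ⟨?_, hil⟩
      rw [← hcl]; congr 1; apply Fin.ext; simp; omega
    · left
      have hlt : (i:ℕ) + 1 < l := by have := i.2; omega
      by_contra hv
      push Not at hv
      have hu : u < c i.succ := by
        by_contra hu
        push Not at hu
        have := hmax ⟨i + 1, hlt⟩ (by
          rw [Finset.mem_filter]
          exact ⟨Finset.mem_univ _, Or.inr hu⟩)
        simp at this
      refine hC (c i.succ) ?_ ⟨hu, hv⟩
      rw [Finset.mem_image]
      refine ⟨i.succ, ?_, rfl⟩
      rw [Finset.mem_filter]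
      refine ⟨Finset.mem_univ _, ?_, ?_⟩ <;> simp <;> omega
  have hlohi : c i.castSucc < c i.succ := hmono Fin.castSucc_lt_succ
  have hi0 : (i:ℕ) = 0 → i = ⟨0, by omega⟩ := fun h => Fin.ext h
  have hi1 : (i:ℕ) = l - 1 → i = ⟨l - 1, by omega⟩ := fun h => Fin.ext h
  rcases he i with ⟨ei, hm⟩ | ⟨ei, hm⟩
  · left
    exact ext_mono hab (hin _).1 (hin _).2 hm
      (h0.imp_right fun h => ⟨h.1, by rw [← hi0 h.2, ei]⟩)
      (h1.imp_right fun h => ⟨h.1, by rw [← hi1 h.2, ei]⟩) hlohi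
  · right
    exact ext_anti hab (hin _).1 (hin _).2 hm
      (h0.imp_right fun h => ⟨h.1, by rw [← hi0 h.2, ei]⟩)
      (h1.imp_right fun h => ⟨h.1, by rw [← hi1 h.2, ei]⟩) hlohi

end Knead

/-- For a continuous piecewise strictly monotone self-map of a compact interval whose turning
points are all attracted to periodic orbits, the topological entropy is a finite nonnegative
real number whose exponential is an algebraic number. -/
theorem exp_entropy_algebraic_of_turning_points_attracted
    (a b : ℝ) (hab : a < b) (f : ℝ → ℝ)
    (hmaps : Set.MapsTo f (Set.Icc a b) (Set.Icc a b))
    (hcont : ContinuousOn f (Set.Icc a b))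
    (l : ℕ) (hl : 1 ≤ l) (c : Fin (l + 1) → ℝ)
    (hmono : StrictMono c) (hc0 : c 0 = a) (hcl : c (Fin.last l) = b)
    (hlaps : ∀ i : Fin l,
      StrictMonoOn f (Set.Icc (c i.castSucc) (c i.succ)) ∨
        StrictAntiOn f (Set.Icc (c i.castSucc) (c i.succ)))
    (hattr : ∀ i : Fin (l + 1), (i : ℕ) ≠ 0 → (i : ℕ) ≠ l →
      ∃ m : ℕ, 1 ≤ m ∧ ∃ p ∈ Set.Icc a b, f^[m] p = p ∧
        Filter.Tendsto (fun n : ℕ => f^[m * n] (c i)) Filter.atTop (nhds p)) :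
    ∃ h : ℝ, 0 ≤ h ∧ Dynamics.coverEntropy f (Set.Icc a b) = (h : EReal) ∧
      IsAlgebraic ℚ (Real.exp h) := by
  classical
  obtain ⟨g, hfg, hpm⟩ := Knead.exists_ext hab hcont hl hmono hc0 hcl hlaps
  have hm : MapsTo g (Icc a b) (Icc a b) := fun x hx => by rw [← hfg hx]; exact hmaps hx
  obtain ⟨s, hs0, hs, hs'⟩ := Knead.growth hpm hm
  refine ⟨s, hs0, Knead.entropy_eq hpm hab hm hfg s hs0 hs hs', ?_⟩
  refine Knead.assembly hpm hab ?_ s hs0 hs hs'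
  intro w hw
  rw [Finset.mem_image] at hw
  obtain ⟨i, hi, rfl⟩ := hw
  rw [Finset.mem_filter] at hi
  have hin : c i ∈ Icc a b :=
    ⟨by rw [← hc0]; exact hmono.monotone (Fin.zero_le _),
     by rw [← hcl]; exact hmono.monotone (Fin.le_last _)⟩
  obtain ⟨m, hm1, p, hp, hpp, ht⟩ := hattr i hi.2.1 hi.2.2
  refine ⟨m, hm1, p, ?_, ?_⟩
  · rw [← Knead.iter_eq hm hfg m p hp]; exact hpp
  · refine ht.congr fun n => ?_
    exact Knead.iter_eq hm hfg _ _ hin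
end

section
/- Let a < b be real numbers and f : [a,b] → [a,b] a continuous map for which there exist l ≥ 1 and points a = c₀ < c₁ < ⋯ < c_l = b such that f is strictly monotone on each lap [c_{i−1}, c_i]. For n ≥ 1 and x ∈ [a,b] let N_n(x) denote the (finite) number of points y ∈ [a,b] with f^{n}(y) = x. Then: (i) for every x ∈ [a,b], limsup_{n→∞} (1/n)·log(max(N_n(x),1)) ≤ h_top(f,[a,b]); and (ii) there exists x ∈ [a,b] for which limsup_{n→∞} (1/n)·log(max(N_n(x),1)) = h_top(f,[a,b]). -/
open Set Filter Topology

/-- If between any two points of `X` there is a point of the finite set `E`,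
then `X` has at most `#E + 1` points. -/
lemma PG.encard_le_of_separated (X E : Set ℝ) (hE : E.Finite)
    (h : ∀ x ∈ X, ∀ y ∈ X, x < y → ∃ e ∈ E, x < e ∧ e < y) :
    X.encard ≤ (E.ncard + 1 : ℕ) := by
  have hinj : InjOn (fun x => (E ∩ Iio x).ncard) X := by
    have key : ∀ x ∈ X, ∀ y ∈ X, x < y → (E ∩ Iio x).ncard < (E ∩ Iio y).ncard := by
      intro x hx y hy hxy
      obtain ⟨e, he, h1, h2⟩ := h x hx y hy hxy
      apply Set.ncard_lt_ncard _ (hE.inter_of_left _)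
      refine ⟨fun z hz => ⟨hz.1, lt_trans hz.2 hxy⟩, fun hsub => ?_⟩
      exact absurd (hsub ⟨he, h2⟩).2 (not_lt.2 h1.le)
    intro x hx y hy hxy
    by_contra hne
    rcases lt_or_gt_of_ne hne with hlt | hlt
    · exact absurd hxy (key x hx y hy hlt).ne
    · exact absurd hxy (key y hy x hx hlt).ne'
  have hmaps : MapsTo (fun x => (E ∩ Iio x).ncard) X (Iio (E.ncard + 1)) := by
    intro x _
    exact Nat.lt_succ_of_le (Set.ncard_le_ncard inter_subset_left hE)
  have := Set.encard_le_encard_of_injOn hmaps hinj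
  refine this.trans (le_of_eq ?_)
  rw [(Set.finite_Iio _).encard_eq_coe_toFinset_card]
  simp

/-- Fibrewise counting. -/
lemma PG.encard_le_of_fibers {α β : Type*} (S : Set α) (T : Set β) (g : α → β) (K M : ℕ)
    (hg : MapsTo g S T) (hT : T.encard ≤ M)
    (hfib : ∀ z ∈ T, (S ∩ g ⁻¹' {z}).encard ≤ K) : S.encard ≤ (K * M : ℕ) := by
  classical
  have hTf : T.Finite := Set.finite_of_encard_le_coe hT
  have hS : S = ⋃ z ∈ T, (S ∩ g ⁻¹' {z}) := by
    ext y
    simp only [mem_iUnion, mem_inter_iff, mem_preimage, mem_singleton_iff, exists_prop]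
    exact ⟨fun h => ⟨g y, hg h, h, rfl⟩, fun ⟨_, _, h, _⟩ => h⟩
  have hSf : S.Finite := by
    rw [hS]
    exact hTf.biUnion fun z hz => Set.finite_of_encard_le_coe (hfib z hz)
  rw [hSf.encard_eq_coe_toFinset_card]
  rw [hTf.encard_eq_coe_toFinset_card] at hT
  have hTcard : hTf.toFinset.card ≤ M := by exact_mod_cast hT
  have := Finset.card_le_mul_card_image_of_maps_to (s := hSf.toFinset) (t := hTf.toFinset)
    (f := g) (fun y hy => by simpa using hg (by simpa using hy)) K (by
      intro z hz
      have h1 := hfib z (by simpa using hz)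
      have h2 : (S ∩ g ⁻¹' {z}) = ((hSf.toFinset.filter fun a => g a = z : Finset α) : Set α) := by
        ext y; simp
      rw [h2, Set.encard_coe_eq_coe_finsetCard] at h1
      exact_mod_cast h1)
  exact_mod_cast this.trans (Nat.mul_le_mul_left _ hTcard)

/-- Set of `n`-th preimages. -/
def PG.P (a b : ℝ) (f : ℝ → ℝ) (n : ℕ) (x : ℝ) : Set ℝ := {y ∈ Set.Icc a b | f^[n] y = x}

/-- Points which hit `C` at some time before `m`. -/
def PG.E (a b : ℝ) (f : ℝ → ℝ) (C : Set ℝ) (m : ℕ) : Set ℝ :=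
  {y ∈ Set.Icc a b | ∃ j < m, f^[j] y ∈ C}

lemma PG.contIter {a b : ℝ} {f : ℝ → ℝ} (hmaps : MapsTo f (Icc a b) (Icc a b))
    (hcont : ContinuousOn f (Icc a b)) (n : ℕ) : ContinuousOn f^[n] (Icc a b) :=
  hcont.iterate hmaps n

/-- A strict intermediate value statement for iterates. -/
lemma PG.ivt {a b : ℝ} {f : ℝ → ℝ} (hmaps : MapsTo f (Icc a b) (Icc a b))
    (hcont : ContinuousOn f (Icc a b)) (n : ℕ) {y z : ℝ} (hy : y ∈ Icc a b) (hz : z ∈ Icc a b)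
    (hyz : y < z) {g : ℝ}
    (hg : (f^[n] y < g ∧ g < f^[n] z) ∨ (f^[n] z < g ∧ g < f^[n] y)) :
    ∃ w, w ∈ Icc a b ∧ y < w ∧ w < z ∧ f^[n] w = g := by
  have hsub : Icc y z ⊆ Icc a b := Icc_subset_Icc hy.1 hz.2
  have hc := (PG.contIter hmaps hcont n).mono hsub
  rcases hg with hg | hg
  · obtain ⟨w, hw, hw'⟩ := intermediate_value_Ioo hyz.le hc hg
    exact ⟨w, hsub (Ioo_subset_Icc_self hw), hw.1, hw.2, hw'⟩
  · obtain ⟨w, hw, hw'⟩ := intermediate_value_Ioo' hyz.le hc hg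
    exact ⟨w, hsub (Ioo_subset_Icc_self hw), hw.1, hw.2, hw'⟩

lemma PG.key {a b : ℝ} {f : ℝ → ℝ} {C : Set ℝ} (hmaps : MapsTo f (Icc a b) (Icc a b))
    (hcont : ContinuousOn f (Icc a b))
    (hC : ∀ p ∈ Icc a b, ∀ q ∈ Icc a b, p < q → f p = f q → ∃ e ∈ C, p < e ∧ e < q) (m : ℕ) :
    ∀ y ∈ Icc a b, ∀ z ∈ Icc a b, y < z → f^[m] y = f^[m] z →
      ∃ e ∈ PG.E a b f C m, y < e ∧ e < z := by
  induction m with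
  | zero => intro y _ z _ hyz h; exact absurd h hyz.ne
  | succ m ih =>
    intro y hy z hz hyz h
    rw [Function.iterate_succ_apply', Function.iterate_succ_apply'] at h
    have hy' := hmaps.iterate m hy
    have hz' := hmaps.iterate m hz
    rcases lt_trichotomy (f^[m] y) (f^[m] z) with hlt | heq | hlt
    · obtain ⟨e, he, h1, h2⟩ := hC _ hy' _ hz' hlt h
      obtain ⟨w, hw, h3, h4, h5⟩ := PG.ivt hmaps hcont m hy hz hyz (Or.inl ⟨h1, h2⟩)
      exact ⟨w, ⟨hw, m, Nat.lt_succ_self m, h5 ▸ he⟩, h3, h4⟩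
    · obtain ⟨e, ⟨he, j, hj, hj'⟩, h1⟩ := ih y hy z hz hyz heq
      exact ⟨e, ⟨he, j, hj.trans (Nat.lt_succ_self m), hj'⟩, h1⟩
    · obtain ⟨e, he, h1, h2⟩ := hC _ hz' _ hy' hlt h.symm
      obtain ⟨w, hw, h3, h4, h5⟩ := PG.ivt hmaps hcont m hy hz hyz (Or.inr ⟨h1, h2⟩)
      exact ⟨w, ⟨hw, m, Nat.lt_succ_self m, h5 ▸ he⟩, h3, h4⟩

lemma PG.P_le_pow {a b : ℝ} {f : ℝ → ℝ} {C : Set ℝ} (hmaps : MapsTo f (Icc a b) (Icc a b))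
    (hCf : C.Finite)
    (hC : ∀ p ∈ Icc a b, ∀ q ∈ Icc a b, p < q → f p = f q → ∃ e ∈ C, p < e ∧ e < q) (n : ℕ) :
    ∀ x, (PG.P a b f n x).encard ≤ ((C.ncard + 1) ^ n : ℕ) := by
  induction n with
  | zero =>
    intro x
    refine (Set.encard_le_encard (t := {x}) ?_).trans (by simp)
    intro y hy
    exact hy.2
  | succ n ih =>
    intro x
    have := PG.encard_le_of_fibers (PG.P a b f (n + 1) x) (PG.P a b f n x) f (C.ncard + 1)
      ((C.ncard + 1) ^ n) (fun y hy => ⟨hmaps hy.1, by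
        have := hy.2; rwa [Function.iterate_succ_apply] at this⟩) (ih x) (by
      intro z _
      apply PG.encard_le_of_separated _ _ hCf
      intro p hp q hq hpq
      exact hC p hp.1.1 q hq.1.1 hpq (hp.2.trans hq.2.symm))
    rwa [pow_succ, mul_comm]

lemma PG.P_finite {a b : ℝ} {f : ℝ → ℝ} {C : Set ℝ} (hmaps : MapsTo f (Icc a b) (Icc a b))
    (hCf : C.Finite)
    (hC : ∀ p ∈ Icc a b, ∀ q ∈ Icc a b, p < q → f p = f q → ∃ e ∈ C, p < e ∧ e < q) (n : ℕ) (x) :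
    (PG.P a b f n x).Finite :=
  Set.finite_of_encard_le_coe (PG.P_le_pow hmaps hCf hC n x)

/-- Counting points of `E` for an arbitrary finite set `G` given a uniform bound. -/
lemma PG.E_le {a b : ℝ} {f : ℝ → ℝ} (G : Set ℝ) (hG : G.Finite) (m M : ℕ)
    (h : ∀ j < m, ∀ g ∈ G, (PG.P a b f j g).encard ≤ M) :
    (PG.E a b f G m).encard ≤ (M * (m * G.ncard) : ℕ) := by
  classical
  have hGe : G.encard = G.ncard := hG.cast_ncard_eq.symm
  -- inject into a union indexed by pairs
  have hT : ((Iio m) ×ˢ G : Set (ℕ × ℝ)).encard ≤ (m * G.ncard : ℕ) := by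
    rw [Set.encard_prod, hGe, (Set.finite_Iio m).encard_eq_coe_toFinset_card]
    simp
  have h1 : ({q : (ℕ × ℝ) × ℝ | q.1 ∈ (Iio m) ×ˢ G ∧ q.2 ∈ PG.P a b f q.1.1 q.1.2}).encard
      ≤ (M * (m * G.ncard) : ℕ) := by
    apply PG.encard_le_of_fibers _ _ Prod.fst _ _ (fun q hq => hq.1) hT
    rintro ⟨j, g⟩ ⟨hj, hg⟩
    refine le_trans ?_ (h j hj g hg)
    apply Set.encard_le_encard_of_injOn (f := Prod.snd)
    · rintro ⟨q, y⟩ ⟨hq, hq'⟩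
      simp only [mem_preimage, mem_singleton_iff] at hq'
      subst hq'
      exact hq.2
    · rintro ⟨q, y⟩ ⟨hq, hq'⟩ ⟨q2, y2⟩ ⟨hq2, hq2'⟩ hh
      simp only [mem_preimage, mem_singleton_iff] at hq' hq2' hh
      rw [hq', hq2', hh]
  refine le_trans ?_ h1
  have : PG.E a b f G m ⊆ Prod.snd ''
      {q : (ℕ × ℝ) × ℝ | q.1 ∈ (Iio m) ×ˢ G ∧ q.2 ∈ PG.P a b f q.1.1 q.1.2} := by
    rintro y ⟨hy, j, hj, hj'⟩
    exact ⟨((j, f^[j] y), y), ⟨⟨hj, hj'⟩, hy, rfl⟩, rfl⟩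
  exact (Set.encard_le_encard this).trans (Set.encard_image_le _ _)

/-- Local count: a set whose orbit is small meets few preimages. -/
lemma PG.local_count {a b : ℝ} {f : ℝ → ℝ} {C : Set ℝ} (hmaps : MapsTo f (Icc a b) (Icc a b))
    (hcont : ContinuousOn f (Icc a b))
    (hC : ∀ p ∈ Icc a b, ∀ q ∈ Icc a b, p < q → f p = f q → ∃ e ∈ C, p < e ∧ e < q)
    (m r M : ℕ) (hM : ∀ x, (PG.P a b f r x).encard ≤ M) (ε : ℝ)
    (hε : ∀ e ∈ PG.E a b f C m, ∀ e' ∈ PG.E a b f C m, e < e' → ε ≤ e' - e) (x : ℝ) (q : ℕ) :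
    ∀ B : Set ℝ, (∀ y ∈ B, ∀ z ∈ B, ∀ k < q, |f^[m * k] y - f^[m * k] z| < ε) →
      (B ∩ PG.P a b f (m * q + r) x).encard ≤ (2 ^ q * M : ℕ) := by
  induction q with
  | zero =>
    intro B _
    refine (Set.encard_le_encard inter_subset_right).trans ?_
    simpa using hM x
  | succ q ih =>
    intro B hB
    have h1 := ih (f^[m] '' B) (by
      rintro _ ⟨y, hy, rfl⟩ _ ⟨z, hz, rfl⟩ k hk
      have := hB y hy z hz (k + 1) (by omega)
      rwa [mul_add, mul_one, Function.iterate_add_apply, Function.iterate_add_apply] at this)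
    have h2 := PG.encard_le_of_fibers (B ∩ PG.P a b f (m * (q + 1) + r) x)
      (f^[m] '' B ∩ PG.P a b f (m * q + r) x) f^[m] 2 (2 ^ q * M) (by
        rintro y ⟨hy, hy1, hy2⟩
        refine ⟨⟨y, hy, rfl⟩, hmaps.iterate m hy1, ?_⟩
        rw [← hy2, ← Function.iterate_add_apply]
        congr 1; ring) h1 (by
        intro z _
        by_contra hcon
        rw [not_le] at hcon
        -- three points
        have hthree : ∃ y1 y2 y3, y1 ∈ (B ∩ PG.P a b f (m * (q + 1) + r) x ∩ f^[m] ⁻¹' {z}) ∧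
            y2 ∈ (B ∩ PG.P a b f (m * (q + 1) + r) x ∩ f^[m] ⁻¹' {z}) ∧
            y3 ∈ (B ∩ PG.P a b f (m * (q + 1) + r) x ∩ f^[m] ⁻¹' {z}) ∧ y1 < y2 ∧ y2 < y3 := by
          have h3 : ((3 : ℕ) : ℕ∞) ≤
              (B ∩ PG.P a b f (m * (q + 1) + r) x ∩ f^[m] ⁻¹' {z}).encard := by
            have := Order.add_one_le_of_lt hcon
            norm_num at this
            exact_mod_cast this
          obtain ⟨t, ht, ht3⟩ := Set.exists_subset_encard_eq h3
          obtain ⟨u, v, w, huv, huw, hvw, rfl⟩ := Set.encard_eq_three.1 (by exact_mod_cast ht3)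
          have hu := ht (show u ∈ ({u, v, w} : Set ℝ) by simp)
          have hv := ht (show v ∈ ({u, v, w} : Set ℝ) by simp)
          have hw := ht (show w ∈ ({u, v, w} : Set ℝ) by simp)
          rcases lt_or_gt_of_ne huv with h | h <;> rcases lt_or_gt_of_ne huw with h' | h' <;>
            rcases lt_or_gt_of_ne hvw with h'' | h''
          · exact ⟨u, v, w, hu, hv, hw, h, h''⟩
          · exact ⟨u, w, v, hu, hw, hv, h', h''⟩
          · exact absurd (h.trans h'') (not_lt.2 h'.le)
          · exact ⟨w, u, v, hw, hu, hv, h', h⟩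
          · exact ⟨v, u, w, hv, hu, hw, h, h'⟩
          · exact absurd (h''.trans h) (not_lt.2 h'.le)
          · exact ⟨v, w, u, hv, hw, hu, h'', h'⟩
          · exact ⟨w, v, u, hw, hv, hu, h'', h⟩
        obtain ⟨y1, y2, y3, ⟨⟨hb1, hp1⟩, hz1⟩, ⟨⟨hb2, hp2⟩, hz2⟩, ⟨⟨hb3, hp3⟩, hz3⟩, h12, h23⟩ :=
          hthree
        obtain ⟨e, he, he1, he2⟩ := PG.key hmaps hcont hC m y1 hp1.1 y2 hp2.1 h12
          (hz1.trans hz2.symm)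
        obtain ⟨e', he', he1', he2'⟩ := PG.key hmaps hcont hC m y2 hp2.1 y3 hp3.1 h23
          (hz2.trans hz3.symm)
        have hs := hε e he e' he' (he2.trans he1')
        have hb := hB y3 hb3 y1 hb1 0 (by omega)
        simp only [mul_zero, Function.iterate_zero, id] at hb
        have := (abs_lt.1 hb).2
        linarith)
    refine h2.trans (le_of_eq ?_)
    congr 1; ring

/-- A finite set of reals has a positive gap. -/
lemma PG.exists_gap (E : Set ℝ) (hE : E.Finite) :
    ∃ ε > 0, ∀ e ∈ E, ∀ e' ∈ E, e < e' → ε ≤ e' - e := by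
  classical
  have hf : ((fun q : ℝ × ℝ => q.2 - q.1) '' (E ×ˢ E ∩ {q | q.1 < q.2})).Finite :=
    ((hE.prod hE).inter_of_left _).image _
  rcases ((fun q : ℝ × ℝ => q.2 - q.1) '' (E ×ˢ E ∩ {q | q.1 < q.2})).eq_empty_or_nonempty
    with h0 | h0
  · refine ⟨1, one_pos, fun e he e' he' hlt => ?_⟩
    have : e' - e ∈ ((fun q : ℝ × ℝ => q.2 - q.1) '' (E ×ˢ E ∩ {q | q.1 < q.2})) :=
      ⟨(e, e'), ⟨⟨he, he'⟩, hlt⟩, rfl⟩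
    rw [h0] at this
    exact this.elim
  · obtain ⟨d, hd, hmin⟩ := Set.exists_min_image _ id hf h0
    obtain ⟨q, ⟨hq1, hq2⟩, rfl⟩ := hd
    refine ⟨q.2 - q.1, sub_pos.2 hq2, fun e he e' he' hlt => ?_⟩
    exact hmin (e' - e) ⟨(e, e'), ⟨⟨he, he'⟩, hlt⟩, rfl⟩

/-- Finite grid. -/
lemma PG.exists_grid (a b ε : ℝ) (hε : 0 < ε) :
    ∃ G : Set ℝ, G.Finite ∧ ∀ p ∈ Icc a b, ∀ q ∈ Icc a b, ε ≤ q - p → ∃ g ∈ G, p < g ∧ g < q := by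
  obtain ⟨t, _, htf, htc⟩ := Metric.totallyBounded_iff.1 (isCompact_Icc (a := a) (b := b)).totallyBounded
    (ε / 4) (by positivity) |>.imp (fun t h => (⟨trivial, h.1, h.2⟩ : True ∧ _ ∧ _))
  refine ⟨t, htf, fun p hp q hq hpq => ?_⟩
  have hmid : (p + q) / 2 ∈ Icc a b := ⟨by linarith [hp.1, hq.1], by linarith [hp.2, hq.2]⟩
  obtain ⟨g, hg, hg'⟩ := mem_iUnion₂.1 (htc hmid)
  rw [Metric.mem_ball, Real.dist_eq, abs_lt] at hg'
  obtain ⟨hlo, hhi⟩ := hg'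
  exact ⟨g, hg, by linarith, by linarith⟩

/-- The set of points hitting a fine grid is a dynamical cover. -/
lemma PG.cover {a b : ℝ} (hab : a < b) {f : ℝ → ℝ} (hmaps : MapsTo f (Icc a b) (Icc a b))
    (hcont : ContinuousOn f (Icc a b)) (ε : ℝ) (hε : 0 < ε) (G : Set ℝ)
    (hG : ∀ p ∈ Icc a b, ∀ q ∈ Icc a b, ε ≤ q - p → ∃ g ∈ G, p < g ∧ g < q) (haG : a ∈ G)
    (n : ℕ) (hn : 0 < n) (s : Finset ℝ) (hs : (s : Set ℝ) = PG.E a b f G n) :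
    Dynamics.IsDynCoverOf f (Icc a b) {p : ℝ × ℝ | dist p.1 p.2 < ε} n s := by
  intro x hx
  have hne : (s.filter (fun y => y ≤ x)).Nonempty := by
    refine ⟨a, Finset.mem_filter.2 ⟨?_, hx.1⟩⟩
    rw [← Finset.mem_coe, hs]
    exact ⟨left_mem_Icc.2 hab.le, 0, hn, haG⟩
  obtain ⟨d, hd, hmax⟩ := Finset.exists_max_image _ id hne
  obtain ⟨hds, hdx⟩ := Finset.mem_filter.1 hd
  have hdE : d ∈ PG.E a b f G n := by rw [← hs]; exact hds
  refine ⟨d, hds, ?_⟩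
  rw [Dynamics.mem_dynEntourage]
  intro k hk
  show dist (f^[k] x) (f^[k] d) < ε
  rcases hdx.eq_or_lt with heq | hlt
  · rw [heq, dist_self]; exact hε
  by_contra hcon
  rw [not_lt, Real.dist_eq] at hcon
  have hx' := hmaps.iterate k hx
  have hd' := hmaps.iterate k hdE.1
  have : ∃ g ∈ G, (f^[k] d < g ∧ g < f^[k] x) ∨ (f^[k] x < g ∧ g < f^[k] d) := by
    rcases le_abs.1 hcon with h | h
    · obtain ⟨g, hg, h'⟩ := hG _ hd' _ hx' h
      exact ⟨g, hg, Or.inl h'⟩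
    · obtain ⟨g, hg, h'⟩ := hG _ hx' _ hd' (by linarith)
      exact ⟨g, hg, Or.inr h'⟩
  obtain ⟨g, hg, h'⟩ := this
  obtain ⟨w, hw, h1, h2, h3⟩ := PG.ivt hmaps hcont k hdE.1 hx hlt h'
  have hws : w ∈ s := by
    rw [← Finset.mem_coe, hs]
    exact ⟨hw, k, hk, h3 ▸ hg⟩
  have := hmax w (Finset.mem_filter.2 ⟨hws, h2.le⟩)
  exact absurd h1 (not_lt.2 this)

/-- The base separation property from the laps. -/
lemma PG.base {a b : ℝ} {f : ℝ → ℝ} (l : ℕ) (c : Fin (l + 1) → ℝ)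
    (hc0 : c 0 = a) (hcl : c (Fin.last l) = b)
    (hlaps : ∀ i : Fin l,
      StrictMonoOn f (Set.Icc (c i.castSucc) (c i.succ)) ∨
        StrictAntiOn f (Set.Icc (c i.castSucc) (c i.succ))) :
    ∀ p ∈ Icc a b, ∀ q ∈ Icc a b, p < q → f p = f q → ∃ e ∈ range c, p < e ∧ e < q := by
  intro p hp q hq hpq h
  by_contra hcon
  push Not at hcon
  have hall : ∀ i : Fin (l + 1), c i ≤ p := by
    intro i
    induction i using Fin.induction with
    | zero => rw [hc0]; exact hp.1
    | succ i ih =>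
      by_contra hlt
      rw [not_le] at hlt
      have hq' := hcon _ (mem_range_self i.succ) hlt
      have hpI : p ∈ Icc (c i.castSucc) (c i.succ) := ⟨ih, hlt.le⟩
      have hqI : q ∈ Icc (c i.castSucc) (c i.succ) := ⟨ih.trans hpq.le, hq'⟩
      rcases hlaps i with hm | hm
      · exact absurd h (hm hpI hqI hpq).ne
      · exact absurd h (hm hpI hqI hpq).ne'
  have := hall (Fin.last l)
  rw [hcl] at this
  linarith [hq.2]

lemma PG.L1 {f : ℝ → ℝ} {F : Set ℝ} {r : ℝ} (h : Dynamics.coverEntropy f F < (r : EReal))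
    {U : Set (ℝ × ℝ)} (hU : U ∈ uniformity ℝ) :
    ∀ᶠ n : ℕ in atTop, ∃ s : Finset ℝ, Dynamics.IsDynCoverOf f F U n s ∧
      (s.card : ℝ) ≤ Real.exp (r * n) := by
  have h1 : Dynamics.coverEntropyEntourage f F U < (r : EReal) :=
    (Dynamics.coverEntropyEntourage_le_coverEntropy f F hU).trans_lt h
  have h2 := eventually_lt_of_limsup_lt h1
  filter_upwards [h2, eventually_gt_atTop 0] with n hn hn0
  have hlog : ENNReal.log (Dynamics.coverMincard f F U n) < ((r * n : ℝ) : EReal) := by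
    have := (EReal.div_lt_iff (c := (n : EReal)) (by exact_mod_cast hn0)
      (by exact EReal.coe_ne_top n)).1 hn
    simpa using this
  have hexp : ((r * n : ℝ) : EReal) = ENNReal.log (ENNReal.ofReal (Real.exp (r * n))) := by
    rw [ENNReal.log_ofReal_of_pos (Real.exp_pos _), Real.log_exp]
  rw [hexp, ENNReal.log_lt_log_iff] at hlog
  have hfin : Dynamics.coverMincard f F U n < ⊤ := by
    rw [lt_top_iff_ne_top]
    intro h
    rw [h] at hlog
    simp at hlog
  obtain ⟨s, hs, hs'⟩ := (Dynamics.coverMincard_finite_iff f F U n).1 hfin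
  refine ⟨s, hs, ?_⟩
  rw [← hs'] at hlog
  have := hlog.le
  simp only [ENat.toENNReal_coe] at this
  rw [ENNReal.le_ofReal_iff_toReal_le (by simp) (Real.exp_pos _).le] at this
  simpa using this

lemma PG.L2 {f : ℝ → ℝ} {F : Set ℝ} {r : ℝ}
    (h : ∀ ε > 0, ∀ᶠ n : ℕ in atTop, ∃ s : Finset ℝ,
      Dynamics.IsDynCoverOf f F {p : ℝ × ℝ | dist p.1 p.2 < ε} n s ∧
      (s.card : ℝ) ≤ Real.exp (r * n)) : Dynamics.coverEntropy f F ≤ (r : EReal) := by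
  refine iSup₂_le fun U hU => ?_
  obtain ⟨ε, hε, hεU⟩ := Metric.mem_uniformity_dist.1 hU
  refine limsup_le_of_le (h := ?_)
  filter_upwards [h ε hε, eventually_gt_atTop 0] with n hn hn0
  obtain ⟨s, hs, hs'⟩ := hn
  have hs2 : Dynamics.IsDynCoverOf f F U n s := hs.of_entourage_subset (fun p hp => hεU hp)
  have h1 := hs2.coverMincard_le_card
  refine (EReal.div_le_iff_le_mul (b := (n : EReal)) (by exact_mod_cast hn0)
      (by exact EReal.coe_ne_top n)).2 ?_
  have hexp : ((r * n : ℝ) : EReal) = ENNReal.log (ENNReal.ofReal (Real.exp (r * n))) := by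
    rw [ENNReal.log_ofReal_of_pos (Real.exp_pos _), Real.log_exp]
  have : ENNReal.log (Dynamics.coverMincard f F U n) ≤ ((r * n : ℝ) : EReal) := by
    rw [hexp, ENNReal.log_le_log_iff]
    refine (ENat.toENNReal_mono h1).trans ?_
    simp only [ENat.toENNReal_coe]
    rw [ENNReal.le_ofReal_iff_toReal_le (by simp) (Real.exp_pos _).le]
    simpa using hs'
  simpa [mul_comm] using this

lemma PG.limsup_le {a b : ℝ} (hab : a < b) {f : ℝ → ℝ} {C : Set ℝ}
    (hmaps : MapsTo f (Icc a b) (Icc a b))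
    (hcont : ContinuousOn f (Icc a b)) (hCf : C.Finite)
    (hC : ∀ p ∈ Icc a b, ∀ q ∈ Icc a b, p < q → f p = f q → ∃ e ∈ C, p < e ∧ e < q)
    (x r r' : ℝ) (hr : Dynamics.coverEntropy f (Icc a b) < (r : EReal)) (hrr : r < r') :
    ∀ᶠ n : ℕ in atTop, Real.log (max ((PG.P a b f n x).ncard) 1 : ℕ) / n < r' := by
  have hr0 : 0 < r := by
    have := (Dynamics.coverEntropy_nonneg f (nonempty_Icc.2 hab.le)).trans_lt hr
    exact_mod_cast this
  have hl2 : 0 < Real.log 2 := Real.log_pos (by norm_num)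
  obtain ⟨m, hm⟩ := exists_nat_gt (2 * Real.log 2 / (r' - r))
  have hm0' : (0 : ℝ) < m := lt_of_le_of_lt (by have := sub_pos.2 hrr; positivity) hm
  have hm0 : 0 < m := by exact_mod_cast hm0'
  have hm1 : Real.log 2 / m < (r' - r) / 2 := by
    rw [div_lt_iff₀ (sub_pos.2 hrr)] at hm
    rw [div_lt_iff₀ hm0']
    linarith
  set K := C.ncard + 1 with hK
  have hK1 : 1 ≤ K := by omega
  have hPK : ∀ j ≤ m, ∀ y, (PG.P a b f j y).encard ≤ (K ^ m : ℕ) := by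
    intro j hj y
    refine (PG.P_le_pow hmaps hCf hC j y).trans ?_
    exact_mod_cast Nat.pow_le_pow_right hK1 hj
  have hEf : (PG.E a b f C m).Finite :=
    Set.finite_of_encard_le_coe (PG.E_le C hCf m (K ^ m) fun j hj g _ => hPK j hj.le g)
  obtain ⟨ε, hε, hgap⟩ := PG.exists_gap _ hEf
  have hU : {p : ℝ × ℝ | dist p.1 p.2 < ε / 2} ∈ uniformity ℝ :=
    Metric.dist_mem_uniformity (by positivity)
  have hKn : ∀ᶠ n : ℕ in atTop, m * Real.log K / n < (r' - r) / 2 :=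
    (tendsto_const_div_atTop_nhds_zero_nat (m * Real.log K)).eventually_lt_const
      (by linarith)
  filter_upwards [PG.L1 hr hU, hKn, eventually_gt_atTop 0] with n ⟨s, hs, hcard⟩ hn1 hn0
  have hn0' : (0 : ℝ) < n := by exact_mod_cast hn0
  set q := n / m with hq
  have hcov : ∀ y : ℝ, ∃ g : ℝ, y ∈ Icc a b →
      g ∈ s ∧ ∀ k < n, dist (f^[k] y) (f^[k] g) < ε / 2 := by
    intro y
    by_cases hy : y ∈ Icc a b
    · obtain ⟨g, hg, hg'⟩ := hs hy
      exact ⟨g, fun _ => ⟨hg, Dynamics.mem_dynEntourage.1 hg'⟩⟩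
    · exact ⟨0, fun h => absurd h hy⟩
  choose g hg using hcov
  have hcount : (PG.P a b f n x).encard ≤ ((2 ^ q * K ^ m) * s.card : ℕ) := by
    apply PG.encard_le_of_fibers (PG.P a b f n x) (s : Set ℝ) g
    · intro y hy
      exact (hg y hy.1).1
    · simp
    · intro z _
      have h1 := PG.local_count hmaps hcont hC m (n % m) (K ^ m)
        (hPK _ (Nat.mod_lt _ hm0).le) ε hgap x q (Icc a b ∩ g ⁻¹' {z}) (by
          intro y hy w hw k hk
          have hkn : m * k < n := by
            have : m * (k + 1) ≤ m * q := Nat.mul_le_mul_left _ hk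
            have h2 : m * q ≤ n := Nat.mul_div_le n m
            rw [mul_add, mul_one] at this
            omega
          have e1 := (hg y hy.1).2 _ hkn
          have e2 := (hg w hw.1).2 _ hkn
          have hy2 : g y = z := hy.2
          have hw2 : g w = z := hw.2
          rw [hy2] at e1
          rw [hw2] at e2
          rw [← Real.dist_eq]
          calc _ ≤ _ := dist_triangle_right _ _ (f^[m * k] z)
            _ < ε := by linarith)
      rw [hq, Nat.div_add_mod] at h1
      refine (Set.encard_le_encard ?_).trans h1
      rintro y ⟨hy, hy'⟩
      exact ⟨⟨hy.1, hy'⟩, hy⟩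
  have hncard : (PG.P a b f n x).ncard ≤ (2 ^ q * K ^ m) * s.card := by
    rw [← (PG.P_finite hmaps hCf hC n x).cast_ncard_eq] at hcount
    exact_mod_cast hcount
  have hKr : (1 : ℝ) ≤ K := by exact_mod_cast hK1
  have hA : (1 : ℝ) ≤ 2 ^ q * K ^ m := one_le_mul_of_one_le_of_one_le
    (one_le_pow₀ (by norm_num)) (one_le_pow₀ hKr)
  have hmax : ((max ((PG.P a b f n x).ncard) 1 : ℕ) : ℝ) ≤ 2 ^ q * K ^ m * Real.exp (r * n) := by
    push_cast
    apply max_le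
    · have : ((PG.P a b f n x).ncard : ℝ) ≤ (2 ^ q * K ^ m) * s.card := by exact_mod_cast hncard
      refine this.trans ?_
      gcongr
    · exact one_le_mul_of_one_le_of_one_le hA (Real.one_le_exp (by positivity))
  have hlog := Real.log_le_log (by positivity) hmax
  rw [Real.log_mul (by positivity) (by positivity), Real.log_mul (by positivity) (by positivity),
    Real.log_pow, Real.log_pow, Real.log_exp] at hlog
  have hqn : (q : ℝ) * Real.log 2 ≤ n * (Real.log 2 / m) := by
    have : (q : ℝ) ≤ n / m := Nat.cast_div_le
    calc (q : ℝ) * Real.log 2 ≤ n / m * Real.log 2 := by gcongr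
      _ = _ := by ring
  rw [div_lt_iff₀ hn0'] at hn1 ⊢
  have : n * (Real.log 2 / m) < n * ((r' - r) / 2) := by gcongr
  nlinarith

lemma PG.entropy_le {a b : ℝ} (hab : a < b) {f : ℝ → ℝ} {C : Set ℝ}
    (hmaps : MapsTo f (Icc a b) (Icc a b))
    (hcont : ContinuousOn f (Icc a b)) (hCf : C.Finite)
    (hC : ∀ p ∈ Icc a b, ∀ q ∈ Icc a b, p < q → f p = f q → ∃ e ∈ C, p < e ∧ e < q)
    (r r' : ℝ) (hr0 : 0 < r) (hrr : r < r')
    (h : ∀ᶠ n : ℕ in atTop, ∀ c ∈ C,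
      Real.log (max ((PG.P a b f n c).ncard) 1 : ℕ) / n < r) :
    Dynamics.coverEntropy f (Icc a b) ≤ (r' : EReal) := by
  apply PG.L2
  intro ε hε
  obtain ⟨G0, hG0f, hG0⟩ := PG.exists_grid a b ε hε
  set G := insert a G0 with hGdef
  have hGf : G.Finite := hG0f.insert a
  have hG : ∀ p ∈ Icc a b, ∀ q ∈ Icc a b, ε ≤ q - p → ∃ g ∈ G, p < g ∧ g < q := by
    intro p hp q hq hpq
    obtain ⟨g, hg, h'⟩ := hG0 p hp q hq hpq
    exact ⟨g, mem_insert_of_mem _ hg, h'⟩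
  obtain ⟨J, hJ⟩ := eventually_atTop.1 h
  set K := C.ncard + 1 with hK
  have hK1 : 1 ≤ K := by omega
  have hKr : (1 : ℝ) ≤ K := by exact_mod_cast hK1
  have hexp1 : ∀ n : ℕ, 1 ≤ Real.exp (r * n) := fun n => Real.one_le_exp (by positivity)
  have hNb : ∀ n j : ℕ, j ≤ n → ∀ c ∈ C,
      ((PG.P a b f j c).ncard : ℝ) ≤ K ^ J * Real.exp (r * n) := by
    intro n j hj c hc
    rcases lt_or_ge j J with hjJ | hjJ
    · have h1 := PG.P_le_pow hmaps hCf hC j c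
      rw [← (PG.P_finite hmaps hCf hC j c).cast_ncard_eq] at h1
      have h2 : (PG.P a b f j c).ncard ≤ K ^ j := by exact_mod_cast h1
      have h3 : (PG.P a b f j c).ncard ≤ K ^ J := h2.trans (Nat.pow_le_pow_right hK1 hjJ.le)
      have h4 : ((PG.P a b f j c).ncard : ℝ) ≤ K ^ J := by exact_mod_cast h3
      exact h4.trans (le_mul_of_one_le_right (by positivity) (hexp1 n))
    · have h1 := hJ j hjJ c hc
      have h2 : Real.log (max ((PG.P a b f j c).ncard) 1 : ℕ) ≤ r * j := by
        rcases Nat.eq_zero_or_pos j with h0 | h0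
        · subst h0
          have := PG.P_le_pow hmaps hCf hC 0 c
          rw [← (PG.P_finite hmaps hCf hC 0 c).cast_ncard_eq] at this
          have h3 : (PG.P a b f 0 c).ncard ≤ 1 := by exact_mod_cast this
          rw [max_eq_right h3]
          simp
        · exact ((div_lt_iff₀ (by exact_mod_cast h0)).1 h1).le
      rw [Real.log_le_iff_le_exp (by positivity)] at h2
      have h3 : ((PG.P a b f j c).ncard : ℝ) ≤ Real.exp (r * j) :=
        le_trans (by exact_mod_cast le_max_left _ _) h2
      have h4 : Real.exp (r * j) ≤ Real.exp (r * n) := by gcongr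
      exact (h3.trans h4).trans (le_mul_of_one_le_left (by positivity) (one_le_pow₀ hKr))
  set B : ℝ := (K ^ J * C.ncard + 1) * G.ncard with hB
  have hB0 : 0 ≤ B := by positivity
  have hlo : ∀ᶠ n : ℕ in atTop, B * (n : ℝ) ^ 2 ≤ Real.exp ((r' - r) * n) := by
    have h1 := (isLittleO_pow_exp_pos_mul_atTop 2 (sub_pos.2 hrr)).bound
      (c := 1 / (B + 1)) (by positivity)
    have h2 := tendsto_natCast_atTop_atTop.eventually h1
    filter_upwards [h2] with n hn
    rw [Real.norm_of_nonneg (by positivity), Real.norm_of_nonneg (by positivity)] at hn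
    rw [one_div, inv_mul_eq_div, le_div_iff₀ (by positivity)] at hn
    nlinarith [sq_nonneg (n : ℝ)]
  filter_upwards [hlo, eventually_gt_atTop 0] with n hn hn0
  set M := ⌊(K : ℝ) ^ J * Real.exp (r * n)⌋₊ with hM
  have hMle : (M : ℝ) ≤ K ^ J * Real.exp (r * n) := Nat.floor_le (by positivity)
  have hP1 : ∀ j < n, ∀ c ∈ C, (PG.P a b f j c).encard ≤ M := by
    intro j hj c hc
    rw [← (PG.P_finite hmaps hCf hC j c).cast_ncard_eq]
    have h1 : (PG.P a b f j c).ncard ≤ M := Nat.le_floor (hNb n j hj.le c hc)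
    exact_mod_cast h1
  have hE1 := PG.E_le C hCf n M hP1
  have hE1f := Set.finite_of_encard_le_coe hE1
  have hE1n : (PG.E a b f C n).ncard ≤ M * (n * C.ncard) := by
    rw [← hE1f.cast_ncard_eq] at hE1
    exact_mod_cast hE1
  have hP2 : ∀ j < n, ∀ g ∈ G, (PG.P a b f j g).encard ≤ (M * (n * C.ncard) + 1 : ℕ) := by
    intro j hj g _
    refine (PG.encard_le_of_separated _ (PG.E a b f C n) hE1f ?_).trans
      (by exact_mod_cast Nat.succ_le_succ hE1n)
    intro y hy z hz hyz
    obtain ⟨e, ⟨he, i, hi, hi'⟩, h'⟩ :=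
      PG.key hmaps hcont hC j y hy.1 z hz.1 hyz (hy.2.trans hz.2.symm)
    exact ⟨e, ⟨he, i, hi.trans hj, hi'⟩, h'⟩
  have hE2 := PG.E_le G hGf n _ hP2
  have hE2f := Set.finite_of_encard_le_coe hE2
  refine ⟨hE2f.toFinset, PG.cover hab hmaps hcont ε hε G hG (mem_insert _ _) n hn0 _
    hE2f.coe_toFinset, ?_⟩
  rw [hE2f.encard_eq_coe_toFinset_card] at hE2
  have hE3 : hE2f.toFinset.card ≤ (M * (n * C.ncard) + 1) * (n * G.ncard) := by exact_mod_cast hE2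
  have hE4 : (hE2f.toFinset.card : ℝ) ≤ (M * (n * C.ncard) + 1) * (n * G.ncard) := by
    exact_mod_cast hE3
  have hn1 : (1 : ℝ) ≤ n := by exact_mod_cast hn0
  calc (hE2f.toFinset.card : ℝ) ≤ (M * (n * C.ncard) + 1) * (n * G.ncard) := hE4
    _ ≤ (K ^ J * Real.exp (r * n) * (n * C.ncard) + Real.exp (r * n) * n) * (n * G.ncard) := by
      gcongr
      exact one_le_mul_of_one_le_of_one_le (hexp1 n) hn1
    _ = B * (n : ℝ) ^ 2 * Real.exp (r * n) := by rw [hB]; ring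
    _ ≤ Real.exp ((r' - r) * n) * Real.exp (r * n) := by gcongr
    _ = Real.exp (r' * n) := by rw [← Real.exp_add]; congr 1; ring

/-- For a continuous piecewise strictly monotone self-map of `[a,b]`, the exponential growth
rate of the number `N_n(x)` of `n`-th preimages of any point `x` is at most the topological
entropy, and equality is achieved at some point. -/
theorem preimage_growth_rate_and_entropy
    (a b : ℝ) (hab : a < b) (f : ℝ → ℝ)
    (hmaps : Set.MapsTo f (Set.Icc a b) (Set.Icc a b))
    (hcont : ContinuousOn f (Set.Icc a b))
    (l : ℕ) (hl : 1 ≤ l) (c : Fin (l + 1) → ℝ)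
    (hmono : StrictMono c) (hc0 : c 0 = a) (hcl : c (Fin.last l) = b)
    (hlaps : ∀ i : Fin l,
      StrictMonoOn f (Set.Icc (c i.castSucc) (c i.succ)) ∨
        StrictAntiOn f (Set.Icc (c i.castSucc) (c i.succ)))
    (N : ℕ → ℝ → ℕ)
    (hN : ∀ (n : ℕ) (x : ℝ), N n x = Set.ncard {y ∈ Set.Icc a b | f^[n] y = x}) :
    (∀ x ∈ Set.Icc a b,
      ((Filter.limsup (fun n : ℕ => Real.log (max (N n x) 1 : ℕ) / n) Filter.atTop : ℝ) : EReal)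
        ≤ Dynamics.coverEntropy f (Set.Icc a b)) ∧
    (∃ x ∈ Set.Icc a b,
      ((Filter.limsup (fun n : ℕ => Real.log (max (N n x) 1 : ℕ) / n) Filter.atTop : ℝ) : EReal)
        = Dynamics.coverEntropy f (Set.Icc a b)) := by
  have hC := PG.base (f := f) l c hc0 hcl hlaps
  have hCf : (range c).Finite := finite_range c
  set u : ℝ → ℕ → ℝ := fun x n => Real.log (max (N n x) 1 : ℕ) / n with hu
  have hNP : ∀ n x, N n x = (PG.P a b f n x).ncard := hN
  set K := (range c).ncard + 1 with hK
  have hu0 : ∀ x n, 0 ≤ u x n := by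
    intro x n
    apply div_nonneg (Real.log_nonneg _) (Nat.cast_nonneg n)
    exact_mod_cast le_max_right _ _
  have huK : ∀ x n, u x n ≤ Real.log K := by
    intro x n
    have hKr : (1 : ℝ) ≤ K := by rw [hK]; push_cast; linarith [Nat.cast_nonneg (α := ℝ) (range c).ncard]
    apply div_le_of_le_mul₀ (Nat.cast_nonneg n) (Real.log_nonneg hKr)
    have h1 := PG.P_le_pow hmaps hCf hC n x
    rw [← (PG.P_finite hmaps hCf hC n x).cast_ncard_eq] at h1
    have h2 : N n x ≤ K ^ n := by rw [hNP]; exact_mod_cast h1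
    have h3 : max (N n x) 1 ≤ K ^ n := max_le h2 (Nat.one_le_pow _ _ (by omega))
    have h4 : ((max (N n x) 1 : ℕ) : ℝ) ≤ (K : ℝ) ^ n := by exact_mod_cast h3
    have h5 := Real.log_le_log (by positivity) h4
    rw [Real.log_pow] at h5
    linarith
  have hbd : ∀ x, IsBoundedUnder (· ≤ ·) atTop (u x) := fun x => isBoundedUnder_of ⟨_, huK x⟩
  have hbd' : ∀ x, IsBoundedUnder (· ≥ ·) atTop (u x) := fun x => isBoundedUnder_of ⟨0, hu0 x⟩
  have hcob : ∀ x, IsCoboundedUnder (· ≤ ·) atTop (u x) := fun x => (hbd' x).isCoboundedUnder_le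
  have hi : ∀ x, ((limsup (u x) atTop : ℝ) : EReal) ≤ Dynamics.coverEntropy f (Icc a b) := by
    intro x
    by_contra hcon
    rw [not_le] at hcon
    obtain ⟨r, hr1, hr2⟩ := EReal.lt_iff_exists_real_btwn.1 hcon
    have hr2' : r < limsup (u x) atTop := by exact_mod_cast hr2
    obtain ⟨r', h1, h2⟩ := exists_between hr2'
    have h3 := PG.limsup_le hab hmaps hcont hCf hC x r r' hr1 h1
    have h4 : limsup (u x) atTop ≤ r' := by
      apply limsup_le_of_le (hcob x)
      filter_upwards [h3] with n hn
      simp only [hu, hNP]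
      exact hn.le
    linarith
  refine ⟨fun x _ => hi x, ?_⟩
  obtain ⟨i, hi'⟩ := Finite.exists_max (fun i => limsup (u (c i)) atTop)
  refine ⟨c i, ⟨hc0 ▸ hmono.monotone (Fin.zero_le i), hcl ▸ hmono.monotone (Fin.le_last i)⟩,
    le_antisymm (hi _) ?_⟩
  have hS0 : 0 ≤ limsup (u (c i)) atTop :=
    le_limsup_of_frequently_le (Frequently.of_forall (hu0 _)) (hbd _)
  refine le_of_forall_gt_imp_ge_of_dense fun t ht => ?_
  obtain ⟨r', hr1, hr2⟩ := EReal.lt_iff_exists_real_btwn.1 ht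
  refine le_trans ?_ hr2.le
  have hr1' : limsup (u (c i)) atTop < r' := by exact_mod_cast hr1
  obtain ⟨r, h1, h2⟩ := exists_between hr1'
  apply PG.entropy_le hab hmaps hcont hCf hC r r' (hS0.trans_lt h1) h2
  have : ∀ᶠ n : ℕ in atTop, ∀ j, u (c j) n < r :=
    eventually_all.2 fun j => eventually_lt_of_limsup_lt ((hi' j).trans_lt h1) (hbd _)
  filter_upwards [this] with n hn
  rintro _ ⟨j, rfl⟩
  have := hn j
  simp only [hu, hNP] at this
  exact this
end

section
/- Let μ ∈ ℝ with 0 < |μ| ≤ 1 and define f : ℝ∖{0} → ℝ∖{0} by f(x) = (1/μ)(x + 1/x) (note x + 1/x ≠ 0 for all real x ≠ 0, so all iterates are defined). Then for every x ≠ 0 the absolute values |fⁿ(x)| tend to +∞ as n → ∞; that is, every orbit in ℝ∖{0} is attracted to the fixed point ∞ of the induced map of the real circle ℝ ∪ {∞}. -/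
open Filter Topology

/-- For `0 < |μ| ≤ 1` and `f(x) = (1/μ)(x + 1/x)`, every orbit in `ℝ∖{0}` is attracted to the
fixed point `∞` of the induced circle map: `|fⁿ(x)| → ∞`. -/
theorem orbits_attracted_to_infinity
    (μ : ℝ) (hμ0 : 0 < |μ|) (hμ1 : |μ| ≤ 1)
    (f : ℝ → ℝ) (hf : f = fun x => (1 / μ) * (x + 1 / x)) :
    ∀ x : ℝ, x ≠ 0 →
      Filter.Tendsto (fun n : ℕ => |f^[n] x|) Filter.atTop Filter.atTop := by
  intro x hx
  have hμ : μ ≠ 0 := abs_pos.mp hμ0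
  have hμ2 : μ ^ 2 ≤ 1 := (sq_le_one_iff_abs_le_one μ).mpr hμ1
  have hinv : 1 ≤ (1 / μ) ^ 2 := by
    rw [div_pow, one_pow]
    exact (one_le_div (by positivity)).mpr hμ2
  have step : ∀ y : ℝ, y ≠ 0 → y ^ 2 + 2 ≤ (f y) ^ 2 := by
    intro y hy
    have e : (y + 1 / y) ^ 2 = y ^ 2 + 2 + (1 / y) ^ 2 := by
      field_simp
      ring
    have h1 : (y + 1 / y) ^ 2 ≤ (f y) ^ 2 := by
      rw [hf]
      simp only [mul_pow]
      exact le_mul_of_one_le_left (sq_nonneg _) hinv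
    nlinarith [sq_nonneg (1 / y)]
  have key : ∀ n : ℕ, f^[n] x ≠ 0 ∧ (n : ℝ) ≤ (f^[n] x) ^ 2 := by
    intro n
    induction n with
    | zero => exact ⟨hx, by simpa using sq_nonneg x⟩
    | succ n ih =>
      rw [Function.iterate_succ_apply']
      have h := step _ ih.1
      refine ⟨fun h0 => ?_, ?_⟩
      · rw [h0] at h
        nlinarith [sq_nonneg (f^[n] x)]
      · push_cast
        linarith [ih.2]
  refine tendsto_atTop_mono (fun n => Real.sqrt_le_iff.mpr ⟨abs_nonneg _, ?_⟩)
    (Real.tendsto_sqrt_atTop.comp tendsto_natCast_atTop_atTop)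
  rw [sq_abs]
  exact (key n).2
end
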